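/- With the Koszul complex K_• of f over R: the homology modules satisfy H₄ = H₃ = 0 and H^i_𝔪(H_p) = 0 for every i > 1 and every p. Moreover, for j = 0,1 and every p, H^j_𝔪(H_p)_{(μ,ν)} = 0 for every bidegree (μ,ν) such that H²_𝔪(K_{p+2−j})_{(μ,ν)} = 0 and H³_𝔪(K_{p+3−j})_{(μ,ν)} = 0. -/

import Mathlib

open MvPolynomial

noncomputable section

/-- the coordinate ring `R = k[s₀,s₁,t₀,t₁]` of `ℙ¹ × ℙ¹` (variables `0,1 ↦ s`, `2,3 ↦ t`). -/
abbrev RR (k : Type) [Field k] := MvPolynomial (Fin 4) k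

/-- `R₁ = k[s₀,s₁]`. -/
abbrev R1 (k : Type) [Field k] := MvPolynomial (Fin 2) k

/-- the homogeneous coordinate ring `S = k[x₀,…,x₃]` of `ℙ³`. -/
abbrev SS (k : Type) [Field k] := MvPolynomial (Fin 4) k

variable (k : Type) [Field k] [IsAlgClosed k]

/-- weights of the four variables `s₀,s₁,t₀,t₁` for the `(s,t)`-bigrading of `R`. -/
def stw : Fin 4 → ℤ × ℤ := fun i => if (i : ℕ) ≤ 1 then (1, 0) else (0, 1)

/-- the bihomogeneous piece of `R` of bidegree `(μ,ν)`. -/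
def Rpiece (μ ν : ℤ) : Submodule k (RR k) := weightedHomogeneousSubmodule k stw (μ, ν)

/-- the point of `𝔸⁴` corresponding to a pair of points of `𝔸²`. -/
def pt (a b : Fin 2 → k) : Fin 4 → k := ![a 0, a 1, b 0, b 1]

variable (f : Fin 4 → RR k)

/-- the set of base points of `φ` inside `ℙ¹ × ℙ¹`. -/
def BasePts : Set (Projectivization k (Fin 2 → k) × Projectivization k (Fin 2 → k)) :=
  {P | ∀ i, eval (pt k P.1.rep P.2.rep) (f i) = 0}

/-- `(a,b) ∈ (𝔸²∖0)²` represents a base point of `φ`. -/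
def IsBasePoint (a b : Fin 2 → k) : Prop :=
  a ≠ 0 ∧ b ≠ 0 ∧ ∀ i, eval (pt k a b) (f i) = 0

/-- the prime ideal of the point `((a₀:a₁),(b₀:b₁))` of `ℙ¹ × ℙ¹`. -/
def ptIdeal (a b : Fin 2 → k) : Ideal (RR k) :=
  Ideal.span {C (a 1) * X 0 - C (a 0) * X 1, C (b 1) * X 2 - C (b 0) * X 3}

/-- the ideal `J` is generated by at most `c` elements locally at the point
`((a₀:a₁),(b₀:b₁))` of `ℙ¹ × ℙ¹` (localization-free formulation). -/
def LocGen (J : Ideal (RR k)) (a b : Fin 2 → k) (c : ℕ) : Prop :=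
  ∃ h ∉ ptIdeal k a b, ∃ g : Fin c → RR k, (∀ j, g j ∈ J) ∧
    ∀ x ∈ J, ∃ t : ℕ, h ^ t * x ∈ Ideal.span (Set.range g)

/-- the Hilbert function of `R/J` in bidegree `(μ,ν)`. -/
def HFq (J : Ideal (RR k)) (μ ν : ℤ) : ℕ :=
  Module.finrank k ↥(Rpiece k μ ν) -
    Module.finrank k ↥(J.restrictScalars k ⊓ Rpiece k μ ν)

section LC

variable {B : Type} [CommRing B] {A : Type} [CommRing A] [Algebra B A]
variable {M : Type} [AddCommGroup M] [Module A M] [Module B M] [IsScalarTower B A M]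
variable (u : Fin 4 → A)

/-- Koszul sign. -/
def cechSign (J : Finset (Fin 4)) (j : Fin 4) : A := (-1 : A) ^ ((J.filter (· < j)).card)

/-- the differential of the Koszul cochain complex on the `t`-th powers of
`u₀,…,u₃`; the direct limit over `t` of its cohomology computes the local
cohomology `H^•_{(u₀,…,u₃)}(M)`. -/
def cechD (t : ℕ) : (Finset (Fin 4) → M) →ₗ[B] (Finset (Fin 4) → M) where
  toFun w J := ∑ j ∈ J, (cechSign (A := A) J j * u j ^ t) • w (J.erase j)
  map_add' w w' := by funext J; simp [smul_add, Finset.sum_add_distrib]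
  map_smul' c w := by
    funext J
    simp only [Pi.smul_apply, RingHom.id_apply, Finset.smul_sum]
    refine Finset.sum_congr rfl fun j hj => ?_
    rw [smul_comm]

/-- the transition chain map from level `t` to level `t+a`. -/
def cechTr (a : ℕ) : (Finset (Fin 4) → M) →ₗ[B] (Finset (Fin 4) → M) where
  toFun w J := ((∏ j ∈ J, u j) ^ a) • w J
  map_add' w w' := by funext J; simp
  map_smul' c w := by
    funext J
    simp only [Pi.smul_apply, RingHom.id_apply]
    rw [smul_comm]

variable (P : ℤ → ℤ → Submodule B M)

/-- the bigraded piece `(μ,ν)` of the degree-`i` term of the Koszul cochain complex on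
`u₀^t,…,u₃^t` (each `uⱼ` having bidegree `(1,1)`). -/
def cechC (t i : ℕ) (μ ν : ℤ) : Submodule B (Finset (Fin 4) → M) where
  carrier := {w | ∀ J, (J.card = i → w J ∈ P (μ + t * i) (ν + t * i)) ∧ (J.card ≠ i → w J = 0)}
  zero_mem' := by intro J; simp
  add_mem' := by
    rintro w w' hw hw' J
    refine ⟨fun h => add_mem ((hw J).1 h) ((hw' J).1 h), fun h => ?_⟩
    simp [Pi.add_apply, (hw J).2 h, (hw' J).2 h]
  smul_mem' := by
    rintro c w hw J
    exact ⟨fun h => Submodule.smul_mem _ _ ((hw J).1 h), fun h => by simp [(hw J).2 h]⟩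

/-- cocycles in bidegree `(μ,ν)` at level `t`. -/
def cocyc (t i : ℕ) (μ ν : ℤ) : Submodule B (Finset (Fin 4) → M) :=
  cechC P t i μ ν ⊓ LinearMap.ker (cechD u t)

/-- coboundaries in bidegree `(μ,ν)` at level `t`. -/
def cobd (t i : ℕ) (μ ν : ℤ) : Submodule B (Finset (Fin 4) → M) :=
  match i with
  | 0 => ⊥
  | (j+1) => Submodule.map (cechD u t) (cechC P t j μ ν)

/-- Vanishing of the bigraded piece `H^i_{(u₀,…,u₃)}(M)_{(μ,ν)}` of local cohomology:
every cocycle at a finite level eventually becomes a coboundary in the direct limit. -/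
def LCvanish (i : ℕ) (μ ν : ℤ) : Prop :=
  ∀ t : ℕ, ∀ w ∈ cocyc u P t i μ ν, ∃ a : ℕ, cechTr (B := B) u a w ∈ cobd u P (t + a) i μ ν

/-- the level-`t` cohomology of the graded piece; `H^i_{(u)}(M)_{(μ,ν)}` is the direct
limit over `t` of these. -/
def cohPiece (t i : ℕ) (μ ν : ℤ) : Type :=
  ↥(cocyc u P t i μ ν) ⧸
    (Submodule.comap (cocyc u P t i μ ν).subtype (cobd u P t i μ ν))

instance (t i : ℕ) (μ ν : ℤ) : AddCommGroup (cohPiece u P t i μ ν) :=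
  inferInstanceAs (AddCommGroup (↥(cocyc u P t i μ ν) ⧸
    (Submodule.comap (cocyc u P t i μ ν).subtype (cobd u P t i μ ν))))

instance (t i : ℕ) (μ ν : ℤ) : Module B (cohPiece u P t i μ ν) :=
  inferInstanceAs (Module B (↥(cocyc u P t i μ ν) ⧸
    (Submodule.comap (cocyc u P t i μ ν).subtype (cobd u P t i μ ν))))

end LC

/-- the four generators `s₀t₀, s₀t₁, s₁t₀, s₁t₁` of the irrelevant ideal
`𝔪 = (s₀,s₁)(t₀,t₁)` of `R`. -/
def uR : Fin 4 → RR k := fun i =>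
  X (⟨(i : ℕ) / 2, by omega⟩ : Fin 4) * X (⟨2 + (i : ℕ) % 2, by omega⟩ : Fin 4)
/-- the Koszul differential `K_{p+1} → K_p` of `f` (on `p`-tensors): contraction with
`f` in the first slot. -/
def DK (p : ℕ) : ((Fin (p + 1) → Fin 4) → RR k) →ₗ[RR k] ((Fin p → Fin 4) → RR k) where
  toFun W a := ∑ i, W (Fin.cons i a) * f i
  map_add' W W' := by funext a; simp [add_mul, Finset.sum_add_distrib]
  map_smul' c W := by
    funext a
    simp only [Pi.smul_apply, smul_eq_mul, RingHom.id_apply, Finset.mul_sum]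
    exact Finset.sum_congr rfl fun i _ => by ring

/-- the alternating `p`-tensors: the Koszul module `K_p = Λ^p R⁴`. -/
def AltT (p : ℕ) : Submodule (RR k) ((Fin p → Fin 4) → RR k) where
  carrier := {W | ∀ (a : Fin p → Fin 4) (i j : Fin p), i ≠ j →
    ((a i = a j → W a = 0) ∧ W (a ∘ Equiv.swap i j) = - W a)}
  zero_mem' := by intro a i j hij; simp
  add_mem' := by
    rintro W W' hW hW' a i j hij
    refine ⟨fun h => ?_, ?_⟩
    · simp [Pi.add_apply, (hW a i j hij).1 h, (hW' a i j hij).1 h]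
    · simp [Pi.add_apply, (hW a i j hij).2, (hW' a i j hij).2]
      ring
  smul_mem' := by
    rintro c W hW a i j hij
    refine ⟨fun h => ?_, ?_⟩
    · simp [Pi.smul_apply, (hW a i j hij).1 h]
    · simp [Pi.smul_apply, (hW a i j hij).2]

/-- the `p`-cycles `Z_p` of the Koszul complex `K_•(f;R)`. -/
def ZK (p : ℕ) : Submodule (RR k) ((Fin p → Fin 4) → RR k) :=
  match p with
  | 0 => AltT k 0
  | (q + 1) => AltT k (q + 1) ⊓ LinearMap.ker (DK k f q)

/-- the `p`-boundaries `B_p` of the Koszul complex `K_•(f;R)`. -/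
def BK (p : ℕ) : Submodule (RR k) ((Fin p → Fin 4) → RR k) :=
  Submodule.map (DK k f p) (AltT k (p + 1))

/-- the Koszul homology module `H_p = Z_p/B_p` of `f`. -/
def HK (p : ℕ) : Type :=
  ↥(ZK k f p) ⧸ (Submodule.comap (ZK k f p).subtype (BK k f p))

instance (p : ℕ) : AddCommGroup (HK k f p) :=
  inferInstanceAs (AddCommGroup (↥(ZK k f p) ⧸
    (Submodule.comap (ZK k f p).subtype (BK k f p))))

instance (p : ℕ) : Module (RR k) (HK k f p) :=
  inferInstanceAs (Module (RR k) (↥(ZK k f p) ⧸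
    (Submodule.comap (ZK k f p).subtype (BK k f p))))

instance (p : ℕ) : Module k (HK k f p) :=
  inferInstanceAs (Module k (↥(ZK k f p) ⧸
    (Submodule.comap (ZK k f p).subtype (BK k f p))))

instance (p : ℕ) : IsScalarTower k (RR k) (HK k f p) :=
  inferInstanceAs (IsScalarTower k (RR k) (↥(ZK k f p) ⧸
    (Submodule.comap (ZK k f p).subtype (BK k f p))))

/-- the bidegree-`(μ,ν)` piece of the Koszul module `K_p ≅ ⊕ R(−pm,−pn)` (ambient
`p`-tensors). -/
def KP (m n : ℕ) (p : ℕ) (μ ν : ℤ) : Submodule k ((Fin p → Fin 4) → RR k) :=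
  ⨅ a : Fin p → Fin 4,
    (Rpiece k (μ - p * m) (ν - p * n)).comap (LinearMap.proj a)

/-- the bidegree-`(μ,ν)` piece of the cycles `Z_p`. -/
def PZ (m n : ℕ) (p : ℕ) (μ ν : ℤ) : Submodule k ↥(ZK k f p) :=
  Submodule.comap (((ZK k f p).subtype).restrictScalars k) (KP k m n p μ ν)

/-- the bidegree-`(μ,ν)` piece of the Koszul homology `H_p`. -/
def PH (m n : ℕ) (p : ℕ) (μ ν : ℤ) : Submodule k (HK k f p) :=
  Submodule.map
    (((Submodule.comap (ZK k f p).subtype (BK k f p)).mkQ).restrictScalars k)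
    (PZ k f m n p μ ν)

/-!
The complexes `0 → Z_{p+1} → K_{p+1} → B_p → 0` and `0 → B_p → Z_p → H_p → 0` reduce everything
to the local cohomology of the outer terms. The ideal `I` annihilates `H_p`, and as the base points
are finite in number, some `l = (s₀ + c s₁) (t₀ + d t₁)` avoids them all; by the Nullstellensatz `𝔪`
is then, up to radical, generated by `l` modulo `I`, so `H^i_𝔪(H_p) = 0` for `i ≥ 2`. On the
Čech complex of the generators `s_i t_j` of `𝔪`, the fourth cohomology vanishes because
`(s₀t₀) (s₁t₁) = (s₀t₁) (s₁t₀)`, and `H⁰_𝔪(K_p) = H¹_𝔪(K_p) = 0` because `s₀t₀` and `s₁t₁` are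
coprime.

For the top Koszul homology, finiteness of the base locus excludes a common prime factor of the
`f_i`. For a cycle `φ`, contracting `e_i ∧ φ` with `f` gives `f_i φ`, and `e_i ∧ φ` is zero when `φ`
has degree `4` and a multiple `y_i det` of the determinant form when it has degree `3`. In the first
case `φ = 0`. In the second, coprimality of the `f_i` gives `y = c f`, so `φ = c (f ⌟ det)` is a
boundary.
-/

section Cech

variable {B : Type} [CommRing B] {A : Type} [CommRing A]
variable {L : Type} [AddCommGroup L] [Module A L] [Module B L]
variable {M : Type} [AddCommGroup M] [Module A M] [Module B M]
variable {N : Type} [AddCommGroup N] [Module A N] [Module B N]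

lemma cechSign_eq_intCast (J : Finset (Fin 4)) (j : Fin 4) :
    cechSign (A := A) J j = (cechSign (A := ℤ) J j : A) := by
  simp [cechSign]

lemma cechSign_mul_self (J : Finset (Fin 4)) (j : Fin 4) :
    cechSign (A := A) J j * cechSign (A := A) J j = 1 := by
  rw [cechSign, ← pow_add, Even.neg_one_pow ⟨_, rfl⟩]

lemma cechSign_erase_self (J : Finset (Fin 4)) (j : Fin 4) :
    cechSign (A := A) (J.erase j) j = cechSign (A := A) J j := by
  rw [cechSign_eq_intCast, cechSign_eq_intCast (A := A) J]
  exact congrArg _ (by revert J j; decide)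

lemma cechSign_insert_self (J : Finset (Fin 4)) (j : Fin 4) :
    cechSign (A := A) (insert j J) j = cechSign (A := A) J j := by
  rw [← cechSign_erase_self, Finset.erase_insert_eq_erase, cechSign_erase_self]

lemma cechSign_mul_cechSign_erase {J : Finset (Fin 4)} {j l : Fin 4} (hj : j ∈ J) (hl : l ∈ J)
    (hjl : j ≠ l) :
    cechSign (A := A) J j * cechSign (A := A) (J.erase j) l =
      -(cechSign (A := A) J l * cechSign (A := A) (J.erase l) j) := by
  simp only [cechSign_eq_intCast (A := A)]
  exact_mod_cast congrArg (Int.cast (R := A)) (by revert J j l; decide :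
    cechSign (A := ℤ) J j * cechSign (A := ℤ) (J.erase j) l =
      -(cechSign (A := ℤ) J l * cechSign (A := ℤ) (J.erase l) j))

lemma cechSign_mul_cechSign_insert {J : Finset (Fin 4)} {j l : Fin 4} (hj : j ∉ J) (hl : l ∈ J) :
    cechSign (A := A) J j * cechSign (A := A) (insert j J) l =
      -(cechSign (A := A) J l * cechSign (A := A) (J.erase l) j) := by
  simp only [cechSign_eq_intCast (A := A)]
  exact_mod_cast congrArg (Int.cast (R := A)) (by revert J j l; decide :
    cechSign (A := ℤ) J j * cechSign (A := ℤ) (insert j J) l =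
      -(cechSign (A := ℤ) J l * cechSign (A := ℤ) (J.erase l) j))

lemma cechSign_smul_mem (p : Submodule B M) (J : Finset (Fin 4)) (j : Fin 4) {x : M}
    (hx : x ∈ p) : cechSign (A := A) J j • x ∈ p := by
  rcases neg_one_pow_eq_or A (J.filter (· < j)).card with h | h <;> simp [cechSign, h, hx]

/-- Stability of a family of bigraded pieces `P` under `u₀, …, u₃`, each of bidegree `(1,1)`. -/
def ShiftStable (u : Fin 4 → A) (P : ℤ → ℤ → Submodule B M) : Prop :=
  ∀ j μ ν x, x ∈ P μ ν → u j • x ∈ P (μ + 1) (ν + 1)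

section Pieces

variable {u : Fin 4 → A} {PL : ℤ → ℤ → Submodule B L} {P : ℤ → ℤ → Submodule B M}
  {PN : ℤ → ℤ → Submodule B N} {i : L →ₗ[A] M} {g : M →ₗ[A] N}

lemma ShiftStable.pow_smul_mem (hP : ShiftStable u P) (j : Fin 4) (t : ℕ) {μ ν : ℤ} {x : M}
    (hx : x ∈ P μ ν) : u j ^ t • x ∈ P (μ + t) (ν + t) := by
  induction t with
  | zero => simpa using hx
  | succ t ih =>
    rw [pow_succ', mul_smul]
    simpa only [Nat.cast_add_one, add_assoc] using hP j _ _ _ ih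

lemma ShiftStable.prod_smul_mem (hP : ShiftStable u P) (J : Finset (Fin 4)) {μ ν : ℤ} {x : M}
    (hx : x ∈ P μ ν) : (∏ j ∈ J, u j) • x ∈ P (μ + J.card) (ν + J.card) := by
  induction J using Finset.induction_on with
  | empty => simpa using hx
  | insert j J hj ih =>
    rw [Finset.prod_insert hj, mul_smul, Finset.card_insert_of_notMem hj]
    simpa only [Nat.cast_add_one, add_assoc] using hP j _ _ _ ih

lemma ShiftStable.prod_pow_smul_mem (hP : ShiftStable u P) (J : Finset (Fin 4)) (a : ℕ)
    {μ ν : ℤ} {x : M} (hx : x ∈ P μ ν) :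
    (∏ j ∈ J, u j) ^ a • x ∈ P (μ + a * J.card) (ν + a * J.card) := by
  induction a with
  | zero => simpa using hx
  | succ a ih =>
    rw [pow_succ', mul_smul]
    simpa only [Nat.cast_add_one, add_assoc, add_mul, one_mul] using hP.prod_smul_mem J ih

lemma comp_mem_cechC (hg : ∀ μ ν x, x ∈ P μ ν → g x ∈ PN μ ν) {t q : ℕ} {μ ν : ℤ}
    {w : Finset (Fin 4) → M} (hw : w ∈ cechC P t q μ ν) : g ∘ w ∈ cechC PN t q μ ν :=
  fun J => ⟨fun hJ => hg _ _ _ ((hw J).1 hJ), fun hJ => by simp [(hw J).2 hJ]⟩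

/-- A short exact sequence of modules with families of bigraded pieces, the pieces of the outer
terms being induced by those of the middle one. -/
structure GrExact (i : L →ₗ[A] M) (g : M →ₗ[A] N) (PL : ℤ → ℤ → Submodule B L)
    (P : ℤ → ℤ → Submodule B M) (PN : ℤ → ℤ → Submodule B N) : Prop where
  injective : Function.Injective i
  exact : Function.Exact i g
  mem_left_iff : ∀ μ ν a, a ∈ PL μ ν ↔ i a ∈ P μ ν
  mem_right_iff : ∀ μ ν c, c ∈ PN μ ν ↔ ∃ x ∈ P μ ν, g x = c

namespace GrExact

lemma map_mem_mid (h : GrExact i g PL P PN) (μ ν : ℤ) (a : L) (ha : a ∈ PL μ ν) : i a ∈ P μ ν :=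
  (h.mem_left_iff μ ν a).1 ha

lemma map_mem_right (h : GrExact i g PL P PN) (μ ν : ℤ) (x : M) (hx : x ∈ P μ ν) :
    g x ∈ PN μ ν :=
  (h.mem_right_iff μ ν _).2 ⟨x, hx, rfl⟩

lemma comp_comp_eq_zero (h : GrExact i g PL P PN) (v : Finset (Fin 4) → L) : g ∘ (i ∘ v) = 0 :=
  funext fun J => h.exact.apply_apply_eq_zero (v J)

lemma exists_cochain_lift (h : GrExact i g PL P PN) {t q : ℕ} {μ ν : ℤ}
    {w : Finset (Fin 4) → N} (hw : w ∈ cechC PN t q μ ν) :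
    ∃ v ∈ cechC P t q μ ν, g ∘ v = w := by
  have hlift : ∀ J, ∃ x, ((J.card = q → x ∈ P (μ + t * q) (ν + t * q)) ∧
      (J.card ≠ q → x = 0)) ∧ g x = w J := by
    intro J
    by_cases hJ : J.card = q
    · obtain ⟨x, hx, hgx⟩ := (h.mem_right_iff _ _ _).1 ((hw J).1 hJ)
      exact ⟨x, ⟨fun _ => hx, fun h' => absurd hJ h'⟩, hgx⟩
    · exact ⟨0, ⟨fun h' => absurd h' hJ, fun _ => rfl⟩, by rw [(hw J).2 hJ, map_zero]⟩
  choose v hv hgv using hlift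
  exact ⟨v, hv, funext hgv⟩

lemma exists_cochain_of_comp_eq_zero (h : GrExact i g PL P PN) {t q : ℕ} {μ ν : ℤ}
    {w : Finset (Fin 4) → M} (hw : w ∈ cechC P t q μ ν) (hgw : g ∘ w = 0) :
    ∃ v ∈ cechC PL t q μ ν, i ∘ v = w := by
  choose v hv using fun J => (h.exact (w J)).1 (congrFun hgw J)
  refine ⟨v, fun J => ⟨fun hJ => (h.mem_left_iff _ _ _).2 ?_, fun hJ => h.injective ?_⟩, funext hv⟩
  · exact (hv J).symm ▸ (hw J).1 hJ
  · rw [hv, map_zero, (hw J).2 hJ]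

end GrExact

end Pieces

variable [Algebra B A] [IsScalarTower B A M]

section Complex

variable (u : Fin 4 → A)

lemma cechD_apply (t : ℕ) (w : Finset (Fin 4) → M) (J : Finset (Fin 4)) :
    cechD (B := B) u t w J = ∑ j ∈ J, (cechSign (A := A) J j * u j ^ t) • w (J.erase j) :=
  rfl

lemma cechTr_apply (a : ℕ) (w : Finset (Fin 4) → M) (J : Finset (Fin 4)) :
    cechTr (B := B) u a w J = ((∏ j ∈ J, u j) ^ a) • w J :=
  rfl

lemma cechD_comp [IsScalarTower B A N] (g : M →ₗ[A] N) (t : ℕ) (w : Finset (Fin 4) → M) :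
    cechD (B := B) u t (g ∘ w) = g ∘ cechD (B := B) u t w := by
  funext J
  simp [cechD_apply]

lemma cechTr_comp [IsScalarTower B A N] (g : M →ₗ[A] N) (a : ℕ) (w : Finset (Fin 4) → M) :
    cechTr (B := B) u a (g ∘ w) = g ∘ cechTr (B := B) u a w := by
  funext J
  simp [cechTr_apply]

lemma cechD_smul (t : ℕ) (c : A) (w : Finset (Fin 4) → M) :
    cechD (B := B) u t (c • w) = c • cechD (B := B) u t w :=
  cechD_comp u (LinearMap.lsmul A M c) t w

lemma cechTr_smul (a : ℕ) (c : A) (w : Finset (Fin 4) → M) :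
    cechTr (B := B) u a (c • w) = c • cechTr (B := B) u a w :=
  cechTr_comp u (LinearMap.lsmul A M c) a w

lemma cechTr_cechTr (a b : ℕ) (w : Finset (Fin 4) → M) :
    cechTr (B := B) u b (cechTr (B := B) u a w) = cechTr (B := B) u (a + b) w := by
  funext J
  simp only [cechTr_apply, smul_smul, ← pow_add, add_comm a b]

lemma cechD_cechTr (t a : ℕ) (w : Finset (Fin 4) → M) :
    cechD (B := B) u (t + a) (cechTr (B := B) u a w) =
      cechTr (B := B) u a (cechD (B := B) u t w) := by
  funext J
  simp only [cechD_apply, cechTr_apply, smul_smul, Finset.smul_sum]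
  refine Finset.sum_congr rfl fun j hj => ?_
  rw [← Finset.mul_prod_erase J u hj]
  ring_nf

lemma cechD_cechD (t : ℕ) (w : Finset (Fin 4) → M) :
    cechD (B := B) u t (cechD (B := B) u t w) = 0 := by
  funext J
  simp only [cechD_apply, Finset.smul_sum, Pi.zero_apply, smul_smul, Finset.sum_sigma']
  refine Finset.sum_involution (fun x _ => ⟨x.2, x.1⟩) ?_ ?_ ?_ fun _ _ => rfl
  · rintro ⟨j, l⟩ h
    obtain ⟨hj, hlj, hl⟩ : j ∈ J ∧ l ≠ j ∧ l ∈ J := by simpa using h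
    rw [Finset.erase_right_comm (a := l) (b := j), ← add_smul]
    convert zero_smul A _
    linear_combination
      (u j ^ t * u l ^ t) * cechSign_mul_cechSign_erase (A := A) hj hl hlj.symm
  · rintro ⟨j, l⟩ h _ he
    obtain ⟨-, hlj, -⟩ : j ∈ J ∧ l ≠ j ∧ l ∈ J := by simpa using h
    exact hlj (congrArg Sigma.fst he)
  · rintro ⟨j, l⟩ h
    obtain ⟨hj, hlj, hl⟩ : j ∈ J ∧ l ≠ j ∧ l ∈ J := by simpa using h
    simp [hj, hl, hlj.symm]

end Complex

variable {u : Fin 4 → A} {PL : ℤ → ℤ → Submodule B L} {P : ℤ → ℤ → Submodule B M}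
  {PN : ℤ → ℤ → Submodule B N}

lemma cechD_mem_cechC (hP : ShiftStable u P) {t q : ℕ} {μ ν : ℤ} {w : Finset (Fin 4) → M}
    (hw : w ∈ cechC P t q μ ν) : cechD (B := B) u t w ∈ cechC P t (q + 1) μ ν := by
  refine fun J => ⟨fun hJ => Submodule.sum_mem _ fun j hj => ?_,
    fun hJ => Finset.sum_eq_zero fun j hj => ?_⟩
  · have hcard : (J.erase j).card = q := by rw [Finset.card_erase_of_mem hj, hJ]; rfl
    rw [mul_smul]
    refine cechSign_smul_mem _ _ _ ?_
    convert hP.pow_smul_mem j t ((hw _).1 hcard) using 2 <;> push_cast <;> ring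
  · have := Finset.card_erase_add_one hj
    rw [(hw (J.erase j)).2 (by omega), smul_zero]

lemma cechTr_mem_cechC (hP : ShiftStable u P) {t q : ℕ} (a : ℕ) {μ ν : ℤ}
    {w : Finset (Fin 4) → M} (hw : w ∈ cechC P t q μ ν) :
    cechTr (B := B) u a w ∈ cechC P (t + a) q μ ν := by
  refine fun J => ⟨fun hJ => ?_, fun hJ => ?_⟩
  · have h := hP.prod_pow_smul_mem J a ((hw J).1 hJ)
    rw [cechTr_apply]
    convert h using 2 <;> rw [hJ] <;> push_cast <;> ring
  · rw [cechTr_apply, (hw J).2 hJ, smul_zero]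

lemma cechD_mem_cocyc (hP : ShiftStable u P) {t q : ℕ} {μ ν : ℤ} {w : Finset (Fin 4) → M}
    (hw : w ∈ cechC P t q μ ν) : cechD (B := B) u t w ∈ cocyc u P t (q + 1) μ ν :=
  ⟨cechD_mem_cechC hP hw, cechD_cechD u t w⟩

lemma cobd_le_cocyc (hP : ShiftStable u P) (t q : ℕ) (μ ν : ℤ) :
    cobd u P t q μ ν ≤ cocyc u P t q μ ν := by
  cases q with
  | zero => exact bot_le
  | succ q =>
    rintro _ ⟨v, hv, rfl⟩
    exact cechD_mem_cocyc hP hv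

lemma cechTr_mem_cocyc (hP : ShiftStable u P) {t q : ℕ} (a : ℕ) {μ ν : ℤ}
    {w : Finset (Fin 4) → M} (hw : w ∈ cocyc u P t q μ ν) :
    cechTr (B := B) u a w ∈ cocyc u P (t + a) q μ ν := by
  refine ⟨cechTr_mem_cechC hP a hw.1, ?_⟩
  rw [SetLike.mem_coe, LinearMap.mem_ker, cechD_cechTr, LinearMap.mem_ker.1 hw.2, map_zero]

lemma cechTr_mem_cobd (hP : ShiftStable u P) {t q : ℕ} (a : ℕ) {μ ν : ℤ}
    {w : Finset (Fin 4) → M} (hw : w ∈ cobd u P t q μ ν) :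
    cechTr (B := B) u a w ∈ cobd u P (t + a) q μ ν := by
  cases q with
  | zero =>
    obtain rfl : w = 0 := hw
    rw [map_zero]
    exact zero_mem _
  | succ q =>
    obtain ⟨v, hv, rfl⟩ := hw
    exact ⟨_, cechTr_mem_cechC hP a hv, cechD_cechTr u t a v⟩

section Functoriality

variable [IsScalarTower B A N] {g : M →ₗ[A] N}

lemma comp_mem_cocyc (hg : ∀ μ ν x, x ∈ P μ ν → g x ∈ PN μ ν) {t q : ℕ} {μ ν : ℤ}
    {w : Finset (Fin 4) → M} (hw : w ∈ cocyc u P t q μ ν) : g ∘ w ∈ cocyc u PN t q μ ν := by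
  refine ⟨comp_mem_cechC hg hw.1, ?_⟩
  rw [SetLike.mem_coe, LinearMap.mem_ker, cechD_comp, LinearMap.mem_ker.1 hw.2]
  exact funext fun _ => map_zero g

lemma comp_mem_cobd (hg : ∀ μ ν x, x ∈ P μ ν → g x ∈ PN μ ν) {t q : ℕ} {μ ν : ℤ}
    {w : Finset (Fin 4) → M} (hw : w ∈ cobd u P t q μ ν) : g ∘ w ∈ cobd u PN t q μ ν := by
  cases q with
  | zero =>
    obtain rfl : w = 0 := hw
    exact funext fun _ => map_zero g
  | succ q =>
    obtain ⟨v, hv, rfl⟩ := hw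
    exact ⟨g ∘ v, comp_mem_cechC hg hv, cechD_comp u g t v⟩

lemma LCvanish.of_retract {i : N →ₗ[A] M} {g : M →ₗ[A] N}
    (hi : ∀ μ ν x, x ∈ PN μ ν → i x ∈ P μ ν) (hg : ∀ μ ν x, x ∈ P μ ν → g x ∈ PN μ ν)
    (hgi : ∀ x, g (i x) = x) {q : ℕ} {μ ν : ℤ} (h : LCvanish u P q μ ν) :
    LCvanish u PN q μ ν := by
  intro t w hw
  obtain ⟨a, ha⟩ := h t _ (comp_mem_cocyc hi hw)
  have hgiw : g ∘ (i ∘ w) = w := funext fun J => hgi (w J)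
  have := comp_mem_cobd hg ha
  rw [← cechTr_comp, hgiw] at this
  exact ⟨a, this⟩

end Functoriality

namespace GrExact

variable {i : L →ₗ[A] M} {g : M →ₗ[A] N}

lemma exists_coboundary_lift [IsScalarTower B A N] (h : GrExact i g PL P PN) {t q : ℕ} {μ ν : ℤ}
    {w : Finset (Fin 4) → N} (hw : w ∈ cobd u PN t q μ ν) :
    ∃ v ∈ cobd u P t q μ ν, g ∘ v = w := by
  cases q with
  | zero =>
    obtain rfl : w = 0 := hw
    exact ⟨0, zero_mem _, funext fun _ => map_zero g⟩
  | succ q =>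
    obtain ⟨c, hc, rfl⟩ := hw
    obtain ⟨v, hv, rfl⟩ := h.exists_cochain_lift hc
    exact ⟨_, ⟨v, hv, rfl⟩, (cechD_comp u g t v).symm⟩

lemma exists_cocycle_of_comp_eq_zero [IsScalarTower B A L] (h : GrExact i g PL P PN) {t q : ℕ}
    {μ ν : ℤ} {w : Finset (Fin 4) → M} (hw : w ∈ cocyc u P t q μ ν) (hgw : g ∘ w = 0) :
    ∃ v ∈ cocyc u PL t q μ ν, i ∘ v = w := by
  obtain ⟨v, hv, rfl⟩ := h.exists_cochain_of_comp_eq_zero hw.1 hgw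
  have hdv : i ∘ cechD (B := B) u t v = 0 := (cechD_comp u i t v).symm.trans hw.2
  exact ⟨v, ⟨hv, funext fun J => h.injective ((congrFun hdv J).trans (map_zero i).symm)⟩, rfl⟩

variable [IsScalarTower B A L] [IsScalarTower B A N]

theorem LCvanish_right (h : GrExact i g PL P PN) (hP : ShiftStable u P) {q : ℕ} {μ ν : ℤ}
    (hM : LCvanish u P q μ ν) (hL : LCvanish u PL (q + 1) μ ν) : LCvanish u PN q μ ν := by
  intro t w hw
  obtain ⟨v, hv, rfl⟩ := h.exists_cochain_lift hw.1
  have hgdv : g ∘ cechD (B := B) u t v = 0 := (cechD_comp u g t v).symm.trans hw.2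
  obtain ⟨z, hz, hiz⟩ := h.exists_cocycle_of_comp_eq_zero (cechD_mem_cocyc hP hv) hgdv
  obtain ⟨x, b, hb, hdb⟩ := hL t z hz
  have hcocyc : cechTr (B := B) u x v - i ∘ b ∈ cocyc u P (t + x) q μ ν := by
    refine ⟨sub_mem (cechTr_mem_cechC hP x hv) (comp_mem_cechC h.map_mem_mid hb), ?_⟩
    rw [SetLike.mem_coe, LinearMap.mem_ker, map_sub, cechD_cechTr, cechD_comp, hdb,
      ← cechTr_comp, hiz, sub_self]
  obtain ⟨y, hy⟩ := hM _ _ hcocyc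
  have hgy := comp_mem_cobd h.map_mem_right hy
  rw [← cechTr_comp, map_comp_sub, h.comp_comp_eq_zero, sub_zero, ← cechTr_comp,
    cechTr_cechTr, add_assoc] at hgy
  exact ⟨x + y, hgy⟩

theorem LCvanish_mid (h : GrExact i g PL P PN) (hP : ShiftStable u P) {q : ℕ} {μ ν : ℤ}
    (hL : LCvanish u PL q μ ν) (hN : LCvanish u PN q μ ν) : LCvanish u P q μ ν := by
  intro t w hw
  obtain ⟨x, hx⟩ := hN t _ (comp_mem_cocyc h.map_mem_right hw)
  obtain ⟨v, hv, hgv⟩ := h.exists_coboundary_lift hx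
  have hg : g ∘ (cechTr (B := B) u x w - v) = 0 := by
    rw [map_comp_sub, hgv, cechTr_comp, sub_self]
  obtain ⟨z, hz, hiz⟩ := h.exists_cocycle_of_comp_eq_zero
    (sub_mem (cechTr_mem_cocyc hP x hw) (cobd_le_cocyc hP _ _ _ _ hv)) hg
  obtain ⟨y, hy⟩ := hL _ _ hz
  have hiy := comp_mem_cobd h.map_mem_mid hy
  rw [← cechTr_comp, hiz, map_sub] at hiy
  have hsum := add_mem hiy (cechTr_mem_cobd hP y hv)
  rw [sub_add_cancel, cechTr_cechTr, add_assoc] at hsum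
  exact ⟨x + y, hsum⟩

theorem LCvanish_left (h : GrExact i g PL P PN) (hP : ShiftStable u P) {q : ℕ} {μ ν : ℤ}
    (hM : LCvanish u P (q + 1) μ ν) (hN : LCvanish u PN q μ ν) :
    LCvanish u PL (q + 1) μ ν := by
  intro t w hw
  obtain ⟨x, v, hv, hdv⟩ := hM t _ (comp_mem_cocyc h.map_mem_mid hw)
  have hcocyc : g ∘ v ∈ cocyc u PN (t + x) q μ ν := by
    refine ⟨comp_mem_cechC h.map_mem_right hv, ?_⟩
    rw [SetLike.mem_coe, LinearMap.mem_ker, cechD_comp, hdv, cechTr_comp, h.comp_comp_eq_zero]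
  obtain ⟨y, hy⟩ := hN _ _ hcocyc
  obtain ⟨v', hv', hgv'⟩ := h.exists_coboundary_lift hy
  have hg : g ∘ (cechTr (B := B) u y v - v') = 0 := by
    rw [map_comp_sub, hgv', cechTr_comp, sub_self]
  obtain ⟨hv'C, hdv'⟩ := cobd_le_cocyc hP _ _ _ _ hv'
  obtain ⟨z, hz, hiz⟩ := h.exists_cochain_of_comp_eq_zero
    (sub_mem (cechTr_mem_cechC hP y hv) hv'C) hg
  have hdz : i ∘ cechD (B := B) u (t + x + y) z = i ∘ cechTr (B := B) u (x + y) w := by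
    rw [← cechD_comp, hiz, map_sub, LinearMap.mem_ker.1 hdv', sub_zero, cechD_cechTr, hdv,
      cechTr_cechTr, cechTr_comp]
  rw [add_assoc] at hz hdz
  exact ⟨x + y, z, hz, h.injective.comp_left hdz⟩

end GrExact

end Cech

section Homotopy

variable {B : Type} [CommRing B] {A : Type} [CommRing A]
variable {M : Type} [AddCommGroup M] [Module A M] [Module B M]

/-- Contraction with the `j`-th basis vector on Koszul cochains, the homotopy between
multiplication by `uⱼ ^ t` and `0` on the complex of the powers `u₀ ^ t, …, u₃ ^ t`. -/
def cechH (A : Type) [CommRing A] [Module A M] (j : Fin 4) :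
    (Finset (Fin 4) → M) →ₗ[A] (Finset (Fin 4) → M) where
  toFun w J := if j ∈ J then 0 else cechSign (A := A) J j • w (insert j J)
  map_add' w w' := by
    funext J
    by_cases hj : j ∈ J <;> simp [hj]
  map_smul' c w := by
    funext J
    by_cases hj : j ∈ J <;> simp [hj, smul_comm c]

lemma cechH_apply_of_mem {j : Fin 4} {J : Finset (Fin 4)} (hj : j ∈ J)
    (w : Finset (Fin 4) → M) : cechH A j w J = 0 :=
  if_pos hj

lemma cechH_apply_of_notMem {j : Fin 4} {J : Finset (Fin 4)} (hj : j ∉ J)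
    (w : Finset (Fin 4) → M) : cechH A j w J = cechSign (A := A) J j • w (insert j J) :=
  if_neg hj

lemma cechH_mem_cechC {P : ℤ → ℤ → Submodule B M} {t q : ℕ} {μ ν : ℤ}
    {w : Finset (Fin 4) → M} (j : Fin 4) (hw : w ∈ cechC P t (q + 1) μ ν) :
    cechH A j w ∈ cechC P t q (μ + t) (ν + t) := by
  intro J
  by_cases hj : j ∈ J
  · simp [cechH_apply_of_mem hj]
  · have hcard := Finset.card_insert_of_notMem hj
    rw [cechH_apply_of_notMem hj]
    refine ⟨fun hJ => cechSign_smul_mem _ _ _ ?_, fun hJ => ?_⟩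
    · convert (hw _).1 (hcard.trans (by rw [hJ])) using 2 <;> push_cast <;> ring
    · rw [(hw _).2 (by omega), smul_zero]

lemma cechH_eq_zero_of_mem_cechC_zero {P : ℤ → ℤ → Submodule B M} {t : ℕ} {μ ν : ℤ}
    {w : Finset (Fin 4) → M} (j : Fin 4) (hw : w ∈ cechC P t 0 μ ν) : cechH A j w = 0 := by
  funext J
  by_cases hj : j ∈ J
  · exact cechH_apply_of_mem hj w
  · rw [cechH_apply_of_notMem hj, (hw _).2 (Finset.card_ne_zero.2 (Finset.insert_nonempty j J)),
      smul_zero, Pi.zero_apply]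

variable [Algebra B A] [IsScalarTower B A M] {u : Fin 4 → A}

variable (u) in
theorem cechD_cechH_add_cechH_cechD (t : ℕ) (j : Fin 4) (w : Finset (Fin 4) → M) :
    cechD (B := B) u t (cechH A j w) + cechH A j (cechD (B := B) u t w) = u j ^ t • w := by
  funext J
  simp only [Pi.add_apply, Pi.smul_apply]
  by_cases hj : j ∈ J
  · rw [cechH_apply_of_mem hj, add_zero, cechD_apply, Finset.sum_eq_single_of_mem j hj]
    · rw [cechH_apply_of_notMem (Finset.notMem_erase j J), Finset.insert_erase hj,
        cechSign_erase_self, smul_smul]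
      congr 1
      linear_combination (u j ^ t) * cechSign_mul_self (A := A) J j
    · intro l _ hlj
      rw [cechH_apply_of_mem (Finset.mem_erase.2 ⟨hlj.symm, hj⟩), smul_zero]
  · rw [cechH_apply_of_notMem hj, cechD_apply, cechD_apply, Finset.sum_insert hj,
      Finset.erase_insert hj, smul_add, cechSign_insert_self, smul_smul, Finset.smul_sum,
      add_left_comm, ← Finset.sum_add_distrib, Finset.sum_eq_zero, add_zero]
    · congr 1
      linear_combination (u j ^ t) * cechSign_mul_self (A := A) J j
    · intro l hl
      have hlj : j ≠ l := fun h => hj (h ▸ hl)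
      rw [cechH_apply_of_notMem fun h => hj (Finset.mem_of_mem_erase h), smul_smul, smul_smul,
        Finset.erase_insert_of_ne hlj, ← add_smul]
      convert zero_smul A _
      linear_combination (u l ^ t) * cechSign_mul_cechSign_insert (A := A) hj hl

variable {P : ℤ → ℤ → Submodule B M}

lemma cechD_cechH_of_mem_cocyc {t q : ℕ} {μ ν : ℤ} {w : Finset (Fin 4) → M}
    (hw : w ∈ cocyc u P t q μ ν) (j : Fin 4) :
    cechD (B := B) u t (cechH A j w) = u j ^ t • w := by
  have h := cechD_cechH_add_cechH_cechD (B := B) u t j w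
  rwa [LinearMap.mem_ker.1 hw.2, map_zero, add_zero] at h

theorem LCvanish_zero_of_isSMulRegular {j : Fin 4} (hj : IsSMulRegular M (u j)) (μ ν : ℤ) :
    LCvanish u P 0 μ ν := by
  intro t w hw
  have hsmul : u j ^ t • w = 0 := by
    rw [← cechD_cechH_of_mem_cocyc hw j, cechH_eq_zero_of_mem_cechC_zero j hw.1, map_zero]
  have hw0 : w = 0 := funext fun J => (hj.pow t).right_eq_zero_of_smul (congrFun hsmul J)
  exact ⟨0, by rw [hw0, map_zero]; exact zero_mem _⟩

lemma single_mem_cechC_zero {t : ℕ} {μ ν : ℤ} {e : M} (he : e ∈ P μ ν) :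
    (Pi.single ∅ e : Finset (Fin 4) → M) ∈ cechC P t 0 μ ν := by
  intro J
  obtain rfl | hJ := eq_or_ne J ∅
  · simpa using he
  · simp [hJ]

lemma eq_single_of_mem_cechC_zero {t : ℕ} {μ ν : ℤ} {w : Finset (Fin 4) → M}
    (hw : w ∈ cechC P t 0 μ ν) : w = Pi.single ∅ (w ∅) := by
  funext J
  obtain rfl | hJ := eq_or_ne J ∅
  · simp
  · rw [Pi.single_eq_of_ne hJ, (hw J).2 (by simpa using hJ)]

/-- The multiple `uᵢ ^ t • w` of a `1`-cocycle `w` is the coboundary of some `x` in degree `0`.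
Comparing the coefficients at `j` shows that `x` is itself divisible by `uᵢ ^ t`. -/
theorem LCvanish_one_of_coprime {i j : Fin 4} (hi : IsSMulRegular M (u i))
    (hij : ∀ (t : ℕ) (μ ν : ℤ) (x y : M), x ∈ P (μ + t) (ν + t) → u j ^ t • x = u i ^ t • y →
      ∃ e ∈ P μ ν, x = u i ^ t • e) (μ ν : ℤ) :
    LCvanish u P 1 μ ν := by
  intro t w hw
  have hC := cechH_mem_cechC (A := A) i hw.1
  have hd := cechD_cechH_of_mem_cocyc hw i
  obtain ⟨x, hx⟩ : ∃ x, cechH A i w = Pi.single ∅ x := ⟨_, eq_single_of_mem_cechC_zero hC⟩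
  have hxP : x ∈ P (μ + t) (ν + t) := by simpa [hx] using (hC ∅).1 rfl
  have hcoeff : u j ^ t • x = u i ^ t • w {j} := by
    simpa [hx, cechD_apply, cechSign, Finset.filter_singleton] using congrFun hd {j}
  obtain ⟨e, he, rfl⟩ := hij t μ ν x (w {j}) hxP hcoeff
  have hsmul : u i ^ t • cechD (B := B) u t (Pi.single ∅ e) = u i ^ t • w := by
    rw [← cechD_smul, ← Pi.single_smul, ← hx, hd]
  have hde : cechD (B := B) u t (Pi.single ∅ e) = w :=
    funext fun J => hi.pow t (congrFun hsmul J)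
  have hTr : cechTr (B := B) u 0 w = w := funext fun J => by simp [cechTr_apply]
  exact ⟨0, Pi.single ∅ e, single_mem_cechC_zero he, by rw [hTr, add_zero, hde]⟩

theorem LCvanish_four_of_mul_eq_mul (hP : ShiftStable u P) (hu : u 0 * u 3 = u 1 * u 2)
    (μ ν : ℤ) : LCvanish u P 4 μ ν := by
  intro t w hw
  have hw' : u 3 ^ (2 * t) • w ∈ cocyc u P (t + t) 4 (μ - ↑(t + t)) (ν - ↑(t + t)) := by
    have hC : u 3 ^ (2 * t) • w ∈ cechC P (t + t) 4 (μ - ↑(t + t)) (ν - ↑(t + t)) := by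
      refine fun J => ⟨fun hJ => ?_, fun hJ => by rw [Pi.smul_apply, (hw.1 J).2 hJ, smul_zero]⟩
      rw [Pi.smul_apply]
      convert hP.pow_smul_mem 3 (2 * t) ((hw.1 J).1 hJ) using 2 <;> push_cast <;> ring
    refine ⟨hC, funext fun J => (cechD_mem_cechC hP hC J).2 ?_⟩
    have := J.card_le_univ
    rw [Fintype.card_fin] at this
    omega
  have hTr : cechTr (B := B) u t w = u 0 ^ (t + t) • u 3 ^ (2 * t) • w := by
    funext J
    by_cases hJ : J.card = 4
    · rw [cechTr_apply, (Finset.card_eq_iff_eq_univ J).1 hJ, Fin.prod_univ_four, mul_assoc (u 0),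
        ← hu, smul_smul, Pi.smul_apply]
      congr 1
      ring
    · simp [cechTr_apply, (hw.1 J).2 hJ]
  refine ⟨t, cechH A 0 (u 3 ^ (2 * t) • w), ?_, ?_⟩
  · simpa only [sub_add_cancel, SetLike.mem_coe] using cechH_mem_cechC 0 hw'.1
  · rw [hTr, cechD_cechH_of_mem_cocyc hw' 0]

end Homotopy

section Graded

lemma exists_homogeneous_coeff {ι κ R σ : Type*} [AddCommGroup ι] [DecidableEq ι] [Fintype κ]
    [CommRing R] [SetLike σ R] [AddSubmonoidClass σ R] (𝒜 : ι → σ) [GradedRing 𝒜] {a : ι} {x : R}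
    (hx : x ∈ 𝒜 a) {d : κ → ι} {y e : κ → R} (hy : ∀ i, y i ∈ 𝒜 (d i))
    (hxe : ∑ i, e i * y i = x) :
    ∃ e' : κ → R, (∀ i, e' i ∈ 𝒜 (a - d i)) ∧ ∑ i, e' i * y i = x := by
  refine ⟨fun i => DirectSum.decompose 𝒜 (e i) (a - d i), fun i => SetLike.coe_mem _, ?_⟩
  rw [← DirectSum.decompose_of_mem_same 𝒜 hx, ← hxe, DirectSum.decompose_sum,
    DFinsupp.finsetSum_apply, AddSubmonoidClass.coe_finsetSum]
  refine Finset.sum_congr rfl fun i _ => ?_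
  rw [← DirectSum.coe_decompose_mul_add_of_right_mem 𝒜 (hy i), sub_add_cancel]

variable {B : Type} [CommRing B] {A : Type} [CommRing A] [Algebra B A]
variable {M : Type} [AddCommGroup M] [Module A M] [Module B M]

/-- Compatibility of a family of bigraded pieces `P` of a module with a bigrading `𝒜` of the
ring. -/
def GrStable (𝒜 : ℤ × ℤ → Submodule B A) (P : ℤ → ℤ → Submodule B M) : Prop :=
  ∀ a b μ ν r x, r ∈ 𝒜 (a, b) → x ∈ P μ ν → r • x ∈ P (μ + a) (ν + b)

variable {𝒜 : ℤ × ℤ → Submodule B A} {u : Fin 4 → A} {P : ℤ → ℤ → Submodule B M}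

lemma GrStable.shiftStable (hP : GrStable 𝒜 P) (hu : ∀ j, u j ∈ 𝒜 (1, 1)) : ShiftStable u P :=
  fun j _ _ _ hx => hP _ _ _ _ _ _ (hu j) hx

lemma GrStable.smul_mem_cechC (hP : GrStable 𝒜 P) {a b : ℤ} {r : A} (hr : r ∈ 𝒜 (a, b))
    {t q : ℕ} {μ ν : ℤ} {w : Finset (Fin 4) → M} (hw : w ∈ cechC P t q μ ν) :
    r • w ∈ cechC P t q (μ + a) (ν + b) := by
  refine fun J => ⟨fun hJ => ?_, fun hJ => by rw [Pi.smul_apply, (hw J).2 hJ, smul_zero]⟩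
  rw [Pi.smul_apply]
  convert hP _ _ _ _ _ _ hr ((hw J).1 hJ) using 1
  rw [add_right_comm, add_right_comm ν]

variable [GradedAlgebra 𝒜]

lemma pow_mem_bigraded {a b : ℤ} {x : A} (hx : x ∈ 𝒜 (a, b)) (t : ℕ) :
    x ^ t ∈ 𝒜 (t * a, t * b) := by
  simpa using SetLike.pow_mem_graded t hx

lemma exists_prod_pow_sub_mul_mem {I : Ideal A} (hu : ∀ j, u j ∈ 𝒜 (1, 1)) {l : A} {N : ℕ}
    {c : Fin 4 → A} (hc : ∀ j, c j ∈ 𝒜 (N - 1, N - 1)) (hcl : ∀ j, u j ^ N - c j * l ∈ I) (T : ℕ)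
    {J : Finset (Fin 4)} (hJ : J.Nonempty) :
    ∃ r ∈ 𝒜 (N * T * J.card - T, N * T * J.card - T),
      (∏ j ∈ J, u j) ^ (N * T) - r * l ^ T ∈ I := by
  obtain ⟨j, hj⟩ := hJ
  have hprod : ∏ i ∈ J.erase j, u i ∈ 𝒜 (J.card - 1, J.card - 1) := by
    have h := SetLike.prod_mem_graded 𝒜 (fun _ => (1, 1)) u (F := J.erase j) fun i _ => hu i
    simpa [← Finset.cast_card_erase_of_mem hj] using h
  refine ⟨(∏ i ∈ J.erase j, u i) ^ (N * T) * c j ^ T, ?_, ?_⟩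
  · convert SetLike.mul_mem_graded (pow_mem_bigraded hprod (N * T)) (pow_mem_bigraded (hc j) T)
      using 2
    ext <;> simp <;> ring
  · have h : (u j ^ N) ^ T - (c j * l) ^ T ∈ I :=
      I.mem_of_dvd (sub_dvd_pow_sub_pow _ _ T) (hcl j)
    convert I.mul_mem_left ((∏ i ∈ J.erase j, u i) ^ (N * T)) h using 1
    rw [← Finset.mul_prod_erase J u hj]
    ring

variable [IsScalarTower B A M]

lemma exists_cechD_eq_smul (hP : GrStable 𝒜 P) (hu : ∀ j, u j ∈ 𝒜 (1, 1)) {t q : ℕ} {μ ν : ℤ}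
    {w : Finset (Fin 4) → M} (hw : w ∈ cocyc u P t (q + 1) μ ν) {a b : ℤ} {r : A}
    (hr : r ∈ 𝒜 (a, b)) (hru : r ∈ Ideal.span (Set.range fun j => u j ^ t)) :
    ∃ v ∈ cechC P t q (μ + a) (ν + b), cechD (B := B) u t v = r • w := by
  obtain ⟨e₀, he₀⟩ := Ideal.mem_span_range_iff_exists_fun.1 hru
  obtain ⟨e, he, rfl⟩ := exists_homogeneous_coeff 𝒜 hr (fun j => pow_mem_bigraded (hu j) t) he₀
  refine ⟨∑ j, e j • cechH A j w, Submodule.sum_mem _ fun j _ => ?_, ?_⟩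
  · convert hP.smul_mem_cechC (he j) (cechH_mem_cechC (A := A) j hw.1) using 1
    simp
  · rw [map_sum, Finset.sum_smul]
    refine Finset.sum_congr rfl fun j _ => ?_
    rw [cechD_smul, cechD_cechH_of_mem_cocyc hw, smul_smul]

/-- On a cochain vanishing at `∅`, the transition to level `t + N T` is divisible by `l ^ T`:
modulo the annihilator, every generator, hence every nonempty product of generators, has a power
divisible by `l`. -/
lemma exists_cechTr_eq_pow_smul (hP : GrStable 𝒜 P) (hu : ∀ j, u j ∈ 𝒜 (1, 1)) {l : A} {N : ℕ}
    {c : Fin 4 → A} (hc : ∀ j, c j ∈ 𝒜 (N - 1, N - 1))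
    (hcl : ∀ j, u j ^ N - c j * l ∈ Module.annihilator A M) {t q T : ℕ} {μ ν : ℤ}
    {v : Finset (Fin 4) → M} (hv : v ∈ cechC P t (q + 1) (μ + T) (ν + T)) :
    ∃ v' ∈ cechC P (t + N * T) (q + 1) μ ν, cechTr (B := B) u (N * T) v = l ^ T • v' := by
  choose! r hr hrl using fun J (hJ : J.Nonempty) =>
    exists_prod_pow_sub_mul_mem hu hc hcl T (J := J) hJ
  refine ⟨fun J => r J • v J, fun J => ⟨fun hJ => ?_, fun hJ => ?_⟩, funext fun J => ?_⟩
  · convert hP _ _ _ _ _ _ (hr J (Finset.card_pos.1 (by omega))) ((hv J).1 hJ) using 1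
    rw [hJ]
    congr 1 <;> push_cast <;> ring
  · simp only [(hv J).2 hJ, smul_zero]
  · obtain rfl | hJ := J.eq_empty_or_nonempty
    · simp [cechTr_apply, (hv ∅).2 (by simp)]
    · have h := Module.mem_annihilator.1 (hrl J hJ) (v J)
      rw [sub_smul, sub_eq_zero] at h
      rw [cechTr_apply, h, Pi.smul_apply, smul_smul, mul_comm]

lemma cechTr_eq_zero_of_pow_smul_eq_zero (hu : ∀ j, u j ∈ 𝒜 (1, 1)) {l : A} {N : ℕ}
    {c : Fin 4 → A} (hc : ∀ j, c j ∈ 𝒜 (N - 1, N - 1))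
    (hcl : ∀ j, u j ^ N - c j * l ∈ Module.annihilator A M) {T : ℕ} {z : Finset (Fin 4) → M}
    (hz : z ∅ = 0) (hlz : l ^ T • z = 0) : cechTr (B := B) u (N * T) z = 0 := by
  funext J
  obtain rfl | hJ := J.eq_empty_or_nonempty
  · rw [cechTr_apply, hz, smul_zero, Pi.zero_apply]
  · obtain ⟨r, -, hr⟩ := exists_prod_pow_sub_mul_mem hu hc hcl T hJ
    have h := Module.mem_annihilator.1 hr (z J)
    rwa [sub_smul, mul_smul, ← Pi.smul_apply (l ^ T), hlz, Pi.zero_apply, smul_zero, sub_zero] at h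

theorem LCvanish_of_principal (hP : GrStable 𝒜 P) (hu : ∀ j, u j ∈ 𝒜 (1, 1)) {l : A}
    (hl : l ∈ 𝒜 (1, 1)) (hlu : l ∈ Ideal.span (Set.range u)) {N : ℕ} {c : Fin 4 → A}
    (hc : ∀ j, c j ∈ 𝒜 (N - 1, N - 1))
    (hcl : ∀ j, u j ^ N - c j * l ∈ Module.annihilator A M) {q : ℕ} (μ ν : ℤ) :
    LCvanish u P (q + 2) μ ν := by
  intro t w hw
  obtain ⟨T, hT⟩ : ∃ T, l ^ T ∈ Ideal.span (Set.range fun j => u j ^ t) := by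
    refine Ideal.mem_radical_iff.1 (Ideal.span_le.2 ?_ hlu)
    rintro _ ⟨j, rfl⟩
    exact Ideal.mem_radical_iff.2 ⟨t, Ideal.subset_span ⟨j, rfl⟩⟩
  have hlT : l ^ T ∈ 𝒜 (T, T) := by simpa using pow_mem_bigraded hl T
  obtain ⟨v, hv, hdv⟩ := exists_cechD_eq_smul hP hu hw hlT hT
  obtain ⟨v', hv', htr⟩ := exists_cechTr_eq_pow_smul (B := B) hP hu hc hcl hv
  have hz : (cechTr (B := B) u (N * T) w - cechD (B := B) u (t + N * T) v') ∅ = 0 := by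
    have hw0 : w ∅ = 0 := (hw.1 ∅).2 (by simp)
    simp [cechTr_apply, cechD_apply, hw0]
  have hlz : l ^ T • (cechTr (B := B) u (N * T) w - cechD (B := B) u (t + N * T) v') = 0 := by
    rw [smul_sub, ← cechTr_smul, ← hdv, ← cechD_smul, ← htr, cechD_cechTr, sub_self]
  refine ⟨N * T + N * T, cechTr (B := B) u (N * T) v', ?_, ?_⟩
  · rw [← add_assoc]
    exact cechTr_mem_cechC (hP.shiftStable hu) (N * T) hv'
  · have h := cechTr_eq_zero_of_pow_smul_eq_zero (B := B) hu hc hcl hz hlz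
    rw [map_sub, sub_eq_zero, cechTr_cechTr] at h
    rw [← add_assoc, cechD_cechTr, h]

end Graded

section KoszulModules

variable {K : Type} [Field K]

attribute [local instance] weightedGradedAlgebra

lemma uR_mem (j : Fin 4) : uR K j ∈ Rpiece K 1 1 := by
  have hX (i : Fin 4) : (X i : RR K) ∈ weightedHomogeneousSubmodule K stw (stw i) :=
    isWeightedHomogeneous_X K stw i
  fin_cases j <;> exact SetLike.mul_mem_graded (hX _) (hX _)

lemma uR_zero_mul_uR_three : uR K 0 * uR K 3 = uR K 1 * uR K 2 := by
  simp [uR]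
  ring

lemma uR_ne_zero (j : Fin 4) : uR K j ≠ 0 :=
  mul_ne_zero (X_ne_zero _) (X_ne_zero _)

lemma isSMulRegular_uR {M : Type} [AddCommGroup M] [Module (RR K) M] [Module.IsTorsionFree (RR K) M]
    (j : Fin 4) : IsSMulRegular M (uR K j) :=
  IsSMulRegular.of_ne_zero (uR_ne_zero j)

lemma isRelPrime_uR_zero_uR_three : IsRelPrime (uR K 0) (uR K 3) := by
  have hX (i j : Fin 4) (hij : i ≠ j) : IsRelPrime (X i : RR K) (X j) :=
    (X_prime (i := i)).irreducible.isRelPrime_iff_not_dvd.2 fun h => hij (X_dvd_X.1 h)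
  exact ((hX _ _ (by decide)).mul_right (hX _ _ (by decide))).mul_left
    ((hX _ _ (by decide)).mul_right (hX _ _ (by decide)))

variable {m n p : ℕ} {μ ν : ℤ}

lemma mem_KP {W : (Fin p → Fin 4) → RR K} :
    W ∈ KP K m n p μ ν ↔ ∀ a, W a ∈ Rpiece K (μ - p * m) (ν - p * n) := by
  simp [KP]

lemma KP_grStable (m n p : ℕ) :
    GrStable (weightedHomogeneousSubmodule K stw) (KP K m n p) := by
  intro a b μ ν r x hr hx
  refine mem_KP.2 fun c => ?_
  have h := SetLike.mul_mem_graded hr (mem_KP.1 hx c)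
  rwa [Prod.mk_add_mk, add_sub, add_sub, add_comm a, add_comm b] at h

lemma LCvanish_one_KP (m n p : ℕ) (μ ν : ℤ) : LCvanish (uR K) (KP K m n p) 1 μ ν := by
  refine LCvanish_one_of_coprime (i := 0) (j := 3) (isSMulRegular_uR 0)
    (fun t μ ν x y hx hxy => ?_) μ ν
  have hdvd (a : Fin p → Fin 4) : uR K 0 ^ t ∣ x a :=
    isRelPrime_uR_zero_uR_three.pow.dvd_of_dvd_mul_left ⟨_, congrFun hxy a⟩
  have hex (a : Fin p → Fin 4) :
      ∃ e ∈ Rpiece K (μ - p * m) (ν - p * n), e * uR K 0 ^ t = x a := by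
    obtain ⟨e₀, he₀⟩ := hdvd a
    obtain ⟨e, he, hex⟩ := exists_homogeneous_coeff (κ := Unit) (weightedHomogeneousSubmodule K stw)
      (mem_KP.1 hx a) (fun _ => pow_mem_bigraded (uR_mem (K := K) 0) t) (e := fun _ => e₀)
      (by simpa [mul_comm] using he₀.symm)
    have he' := he ()
    rw [Prod.mk_sub_mk, mul_one, sub_right_comm, add_sub_cancel_right, sub_right_comm,
      add_sub_cancel_right] at he'
    exact ⟨e (), he', by simpa using hex⟩
  choose e he hex using hex
  exact ⟨e, mem_KP.2 he, funext fun a => (hex a).symm.trans (mul_comm _ _)⟩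

/-- The bidegree-`(μ,ν)` piece of a submodule of the `p`-tensors. -/
def subPiece (m n : ℕ) (Q : Submodule (RR K) ((Fin p → Fin 4) → RR K)) (μ ν : ℤ) :
    Submodule K Q :=
  (KP K m n p μ ν).comap (Q.subtype.restrictScalars K)

lemma mem_subPiece {Q : Submodule (RR K) ((Fin p → Fin 4) → RR K)} {x : Q} :
    x ∈ subPiece m n Q μ ν ↔ (x : (Fin p → Fin 4) → RR K) ∈ KP K m n p μ ν := Iff.rfl

lemma subPiece_grStable (m n : ℕ) (Q : Submodule (RR K) ((Fin p → Fin 4) → RR K)) :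
    GrStable (weightedHomogeneousSubmodule K stw) (subPiece m n Q) :=
  fun _ _ _ _ _ _ hr hx => KP_grStable m n p _ _ _ _ _ _ hr hx

lemma LCvanish_zero_subPiece (m n : ℕ) (Q : Submodule (RR K) ((Fin p → Fin 4) → RR K))
    (μ ν : ℤ) : LCvanish (uR K) (subPiece m n Q) 0 μ ν :=
  LCvanish_zero_of_isSMulRegular (isSMulRegular_uR 0) μ ν

end KoszulModules

section AlternatingTensors

variable {K : Type} [Field K] {p : ℕ}

/-- The coefficients of an alternating form on `R⁴` in the standard basis; this identifies the
forms with the alternating tensors. -/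
def altCoeff (p : ℕ) :
    ((Fin 4 → RR K) [⋀^Fin p]→ₗ[RR K] RR K) →ₗ[RR K] ((Fin p → Fin 4) → RR K) where
  toFun φ a := φ fun i => Pi.single (a i) 1
  map_add' _ _ := rfl
  map_smul' _ _ := rfl

lemma altCoeff_apply (φ : (Fin 4 → RR K) [⋀^Fin p]→ₗ[RR K] RR K) (a : Fin p → Fin 4) :
    altCoeff p φ a = φ fun i => Pi.single (a i) 1 := rfl

lemma altCoeff_injective : Function.Injective (altCoeff (K := K) p) := by
  intro φ ψ h
  refine (Pi.basisFun (RR K) (Fin 4)).ext_alternating fun a _ => ?_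
  simpa only [Pi.basisFun_apply, altCoeff_apply] using congrFun h a

lemma altCoeff_mem_AltT (φ : (Fin 4 → RR K) [⋀^Fin p]→ₗ[RR K] RR K) :
    altCoeff p φ ∈ AltT K p := fun a i j hij =>
  ⟨fun h => φ.map_eq_zero_of_eq _ (by simp only [h]) hij,
    φ.map_swap (fun i => Pi.single (a i) 1) hij⟩

/-- The multilinear form on `R⁴` with given coefficients. -/
def tensorForm (W : (Fin p → Fin 4) → RR K) :
    MultilinearMap (RR K) (fun _ : Fin p => Fin 4 → RR K) (RR K) :=
  ∑ a, W a • (MultilinearMap.mkPiAlgebra (RR K) (Fin p) (RR K)).compLinearMap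
    fun i => LinearMap.proj (a i)

lemma tensorForm_apply (W : (Fin p → Fin 4) → RR K) (v : Fin p → Fin 4 → RR K) :
    tensorForm W v = ∑ a, W a * ∏ i, v i (a i) := by
  simp [tensorForm]

/-- Terms whose index tuples differ by the transposition of two equal arguments cancel. -/
lemma tensorForm_eq_zero_of_mem_AltT {W : (Fin p → Fin 4) → RR K} (hW : W ∈ AltT K p)
    (v : Fin p → Fin 4 → RR K) (i j : Fin p) (hv : v i = v j) (hij : i ≠ j) :
    tensorForm W v = 0 := by
  rw [tensorForm_apply]
  refine Finset.sum_involution (fun a _ => a ∘ Equiv.swap i j) (fun a _ => ?_) (fun a _ ha h => ?_)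
    (fun _ _ => Finset.mem_univ _) fun a _ => ?_
  · have hprod : ∏ l, v l ((a ∘ Equiv.swap i j) l) = ∏ l, v l (a l) := by
      rw [← Equiv.prod_comp (Equiv.swap i j) fun l => v l (a l)]
      refine Finset.prod_congr rfl fun l _ => ?_
      rw [Function.comp_apply, Equiv.apply_swap_eq_self hv]
    rw [hprod, (hW a i j hij).2, neg_mul, add_neg_cancel]
  · refine ha ?_
    have hij' := congrFun h j
    rw [Function.comp_apply, Equiv.swap_apply_right] at hij'
    rw [(hW a i j hij).1 hij', zero_mul]
  · simp [Function.comp_assoc, ← Equiv.Perm.coe_mul]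

theorem exists_altCoeff_eq_of_mem_AltT {W : (Fin p → Fin 4) → RR K} (hW : W ∈ AltT K p) :
    ∃ φ, altCoeff p φ = W := by
  refine ⟨{ tensorForm W with map_eq_zero_of_eq' := tensorForm_eq_zero_of_mem_AltT hW }, ?_⟩
  funext a
  refine (tensorForm_apply W _).trans ?_
  rw [Finset.sum_eq_single_of_mem a (Finset.mem_univ a) fun b _ hb => ?_]
  · simp
  · obtain ⟨i, hi⟩ := Function.ne_iff.1 hb
    rw [Finset.prod_eq_zero (Finset.mem_univ i) (Pi.single_eq_of_ne hi _), mul_zero]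

lemma apply_comp_perm_of_mem_AltT {W : (Fin p → Fin 4) → RR K} (hW : W ∈ AltT K p)
    (a : Fin p → Fin 4) (σ : Equiv.Perm (Fin p)) : W (a ∘ σ) = Equiv.Perm.sign σ • W a := by
  obtain ⟨φ, rfl⟩ := exists_altCoeff_eq_of_mem_AltT hW
  exact φ.map_perm (fun i => Pi.single (a i) 1) σ

lemma apply_eq_zero_of_mem_AltT {W : (Fin p → Fin 4) → RR K} (hW : W ∈ AltT K p)
    {a : Fin p → Fin 4} (ha : ¬Function.Injective a) : W a = 0 := by
  simp only [Function.Injective, not_forall] at ha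
  obtain ⟨i, j, hij, hne⟩ := ha
  exact (hW a i j hne).1 hij

open Classical in
/-- The alternating tensor with the same values as a given tensor on increasing tuples. It
retracts the tensors onto `AltT` in any characteristic, unlike antisymmetrization. -/
def alternize (p : ℕ) : ((Fin p → Fin 4) → RR K) →ₗ[RR K] ((Fin p → Fin 4) → RR K) where
  toFun W a := if Function.Injective a then
    Equiv.Perm.sign (Tuple.sort a) • W (a ∘ Tuple.sort a) else 0
  map_add' W W' := by
    funext a
    simp only [Pi.add_apply]
    split_ifs <;> simp
  map_smul' c W := by
    funext a
    simp only [Pi.smul_apply, RingHom.id_apply, smul_comm _ c]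
    split_ifs <;> simp

lemma alternize_apply (W : (Fin p → Fin 4) → RR K) {a : Fin p → Fin 4}
    (ha : Function.Injective a) :
    alternize p W a = Equiv.Perm.sign (Tuple.sort a) • W (a ∘ Tuple.sort a) :=
  if_pos ha

lemma alternize_apply_of_not_injective (W : (Fin p → Fin 4) → RR K) {a : Fin p → Fin 4}
    (ha : ¬Function.Injective a) : alternize p W a = 0 :=
  if_neg ha

lemma alternize_mem_AltT (W : (Fin p → Fin 4) → RR K) : alternize p W ∈ AltT K p := by
  intro a i j hij
  refine ⟨fun h => alternize_apply_of_not_injective W fun ha => hij (ha h), ?_⟩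
  by_cases ha : Function.Injective a
  · have hsort := Tuple.comp_perm_comp_sort_eq_comp_sort (f := a) (σ := Equiv.swap i j)
    have hmul : Equiv.swap i j * Tuple.sort (a ∘ Equiv.swap i j) = Tuple.sort a :=
      Equiv.ext fun x => ha (congrFun hsort x)
    rw [alternize_apply W ha, alternize_apply W (ha.comp (Equiv.injective _)), hsort, ← hmul,
      Equiv.Perm.sign_mul, Equiv.Perm.sign_swap hij, neg_one_mul, Units.neg_smul, neg_neg]
  · rw [alternize_apply_of_not_injective W ha, alternize_apply_of_not_injective W, neg_zero]
    rwa [Equiv.injective_comp]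

lemma alternize_eq_self {W : (Fin p → Fin 4) → RR K} (hW : W ∈ AltT K p) :
    alternize p W = W := by
  funext a
  by_cases ha : Function.Injective a
  · rw [alternize_apply W ha, apply_comp_perm_of_mem_AltT hW, smul_smul, Int.units_mul_self,
      one_smul]
  · rw [alternize_apply_of_not_injective W ha, apply_eq_zero_of_mem_AltT hW ha]

variable {m n : ℕ} {μ ν : ℤ}

lemma alternize_mem_KP {W : (Fin p → Fin 4) → RR K} (hW : W ∈ KP K m n p μ ν) :
    alternize p W ∈ KP K m n p μ ν := by
  refine mem_KP.2 fun a => ?_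
  by_cases ha : Function.Injective a
  · have := mem_KP.1 hW (a ∘ Tuple.sort a)
    rw [alternize_apply W ha]
    rcases Int.units_eq_one_or (Equiv.Perm.sign (Tuple.sort a)) with h | h <;> simp [h, this]
  · rw [alternize_apply_of_not_injective W ha]
    exact zero_mem _

lemma LCvanish_AltT {q : ℕ} (h : LCvanish (uR K) (KP K m n p) q μ ν) :
    LCvanish (uR K) (subPiece m n (AltT K p)) q μ ν :=
  LCvanish.of_retract (i := (AltT K p).subtype)
    (g := (alternize p).codRestrict (AltT K p) alternize_mem_AltT) (fun _ _ _ hx => hx)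
    (fun _ _ _ hx => alternize_mem_KP hx) (fun x => Subtype.ext (alternize_eq_self x.2)) h

end AlternatingTensors

section KoszulCycles

variable {K : Type} [Field K] {f : Fin 4 → RR K} {p : ℕ}

lemma DK_apply (W : (Fin (p + 1) → Fin 4) → RR K) (a : Fin p → Fin 4) :
    DK K f p W a = ∑ i, W (Fin.cons i a) * f i := rfl

lemma DK_altCoeff (φ : (Fin 4 → RR K) [⋀^Fin (p + 1)]→ₗ[RR K] RR K) :
    DK K f p (altCoeff (p + 1) φ) = altCoeff p (φ.curryLeft f) := by
  funext a
  have hcons (i : Fin 4) : (fun l => Pi.single ((Fin.cons i a : Fin (p + 1) → Fin 4) l) 1) =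
      (Matrix.vecCons (Pi.single i 1) fun l => Pi.single (a l) 1 :
        Fin (p + 1) → Fin 4 → RR K) :=
    funext <| Fin.cases rfl fun _ => rfl
  rw [DK_apply]
  conv_rhs => rw [pi_eq_sum_univ' f, map_sum, map_sum, Finset.sum_apply]
  refine Finset.sum_congr rfl fun i _ => ?_
  rw [map_smul, map_smul, Pi.smul_apply, smul_eq_mul, mul_comm, altCoeff_apply, altCoeff_apply,
    hcons, AlternatingMap.curryLeft_apply_apply]

lemma DK_mem_AltT {W : (Fin (p + 1) → Fin 4) → RR K} (hW : W ∈ AltT K (p + 1)) :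
    DK K f p W ∈ AltT K p := by
  obtain ⟨φ, rfl⟩ := exists_altCoeff_eq_of_mem_AltT hW
  rw [DK_altCoeff]
  exact altCoeff_mem_AltT _

lemma DK_DK {W : (Fin (p + 2) → Fin 4) → RR K} (hW : W ∈ AltT K (p + 2)) :
    DK K f p (DK K f (p + 1) W) = 0 := by
  obtain ⟨φ, rfl⟩ := exists_altCoeff_eq_of_mem_AltT hW
  rw [DK_altCoeff, DK_altCoeff, AlternatingMap.curryLeft_same, map_zero]

lemma ZK_le_AltT (p : ℕ) : ZK K f p ≤ AltT K p := by
  cases p with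
  | zero => exact le_rfl
  | succ p => exact inf_le_left

lemma BK_le_ZK (p : ℕ) : BK K f p ≤ ZK K f p := by
  rintro _ ⟨W, hW, rfl⟩
  cases p with
  | zero => exact DK_mem_AltT hW
  | succ p => exact ⟨DK_mem_AltT hW, DK_DK hW⟩

lemma altCoeff_curryLeft_mem_BK (φ : (Fin 4 → RR K) [⋀^Fin (p + 1)]→ₗ[RR K] RR K) :
    altCoeff p (φ.curryLeft f) ∈ BK K f p :=
  ⟨_, altCoeff_mem_AltT φ, DK_altCoeff φ⟩

/-- The homology class of a cycle. -/
def mkHK (f : Fin 4 → RR K) (p : ℕ) : ZK K f p →ₗ[RR K] HK K f p :=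
  ((BK K f p).comap (ZK K f p).subtype).mkQ

lemma mkHK_surjective : Function.Surjective (mkHK f p) :=
  Submodule.mkQ_surjective _

lemma mkHK_eq_zero {z : ZK K f p} :
    mkHK f p z = 0 ↔ (z : (Fin p → Fin 4) → RR K) ∈ BK K f p :=
  Submodule.Quotient.mk_eq_zero _

lemma subsingleton_HK (h : ZK K f p ≤ BK K f p) : Subsingleton (HK K f p) :=
  subsingleton_of_forall_eq 0 <| mkHK_surjective.forall.2 fun z => mkHK_eq_zero.2 (h z.2)

section Graded

variable {m n : ℕ} {μ ν : ℤ}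

attribute [local instance] weightedGradedAlgebra

lemma bidegree_sub_succ_add (m n p : ℕ) (μ ν : ℤ) :
    (μ - (p + 1 : ℕ) * m, ν - (p + 1 : ℕ) * n) + ((m : ℤ), (n : ℤ)) =
      (μ - p * m, ν - p * n) := by
  rw [Prod.mk_add_mk, Prod.mk.injEq]
  push_cast
  constructor <;> ring

lemma DK_mem_KP (hf : ∀ i, f i ∈ Rpiece K m n) {W : (Fin (p + 1) → Fin 4) → RR K}
    (hW : W ∈ KP K m n (p + 1) μ ν) : DK K f p W ∈ KP K m n p μ ν := by
  refine mem_KP.2 fun a => ?_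
  rw [DK_apply, Rpiece, ← bidegree_sub_succ_add]
  exact Submodule.sum_mem _ fun i _ => SetLike.mul_mem_graded (mem_KP.1 hW _) (hf i)

lemma exists_mem_KP_DK_eq (hf : ∀ i, f i ∈ Rpiece K m n) {W : (Fin (p + 1) → Fin 4) → RR K}
    (hW : W ∈ AltT K (p + 1)) (hD : DK K f p W ∈ KP K m n p μ ν) :
    ∃ V ∈ AltT K (p + 1), V ∈ KP K m n (p + 1) μ ν ∧ DK K f p V = DK K f p W := by
  set 𝒜 := weightedHomogeneousSubmodule K stw
  set d : ℤ × ℤ := (μ - (p + 1 : ℕ) * m, ν - (p + 1 : ℕ) * n)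
  refine ⟨fun a => GradedRing.proj 𝒜 d (W a), fun a i j hij => ⟨fun h => ?_, ?_⟩,
    mem_KP.2 fun a => SetLike.coe_mem (DirectSum.decompose 𝒜 (W a) d), funext fun a => ?_⟩
  · simp only [(hW a i j hij).1 h, map_zero]
  · simp only [(hW a i j hij).2, map_neg]
  · rw [← DirectSum.decompose_of_mem_same 𝒜 (mem_KP.1 hD a), ← bidegree_sub_succ_add,
      ← GradedRing.proj_apply, DK_apply, DK_apply, map_sum]
    refine Finset.sum_congr rfl fun i _ => ?_
    rw [GradedRing.proj_apply, GradedRing.proj_apply,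
      DirectSum.coe_decompose_mul_add_of_right_mem 𝒜 (hf i)]

lemma grExact_ZK_AltT_BK (hf : ∀ i, f i ∈ Rpiece K m n) (p : ℕ) :
    GrExact (Submodule.inclusion (ZK_le_AltT (f := f) (p + 1)))
      ((DK K f p).restrict (p := AltT K (p + 1)) (q := BK K f p) fun _ hW => ⟨_, hW, rfl⟩)
      (subPiece m n (ZK K f (p + 1))) (subPiece m n (AltT K (p + 1)))
      (subPiece m n (BK K f p)) where
  injective := Submodule.inclusion_injective _
  exact x := ⟨fun hx => ⟨⟨x.1, x.2, congrArg Subtype.val hx⟩, rfl⟩,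
    fun ⟨z, hz⟩ => hz ▸ Subtype.ext z.2.2⟩
  mem_left_iff _ _ _ := Iff.rfl
  mem_right_iff μ ν c := by
    refine ⟨fun hc => ?_, fun ⟨x, hx, hxc⟩ => hxc ▸ DK_mem_KP hf hx⟩
    obtain ⟨W, hW, hWc⟩ := c.2
    rw [mem_subPiece, ← hWc] at hc
    obtain ⟨V, hV, hVK, hVW⟩ := exists_mem_KP_DK_eq hf hW hc
    exact ⟨⟨V, hV⟩, hVK, Subtype.ext (hVW.trans hWc)⟩

lemma grExact_BK_ZK_HK (m n p : ℕ) :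
    GrExact (Submodule.inclusion (BK_le_ZK (f := f) p)) (mkHK f p)
      (subPiece m n (BK K f p)) (subPiece m n (ZK K f p)) (PH K f m n p) where
  injective := Submodule.inclusion_injective _
  exact x := ⟨fun hx => ⟨⟨x.1, mkHK_eq_zero.1 hx⟩, rfl⟩, fun ⟨b, hb⟩ => hb ▸ mkHK_eq_zero.2 b.2⟩
  mem_left_iff _ _ _ := Iff.rfl
  mem_right_iff _ _ _ := Iff.rfl

lemma PH_grStable (m n p : ℕ) :
    GrStable (weightedHomogeneousSubmodule K stw) (PH K f m n p) := by
  rintro a b μ ν r _ hr ⟨x, hx, rfl⟩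
  exact ⟨r • x, subPiece_grStable m n _ a b μ ν r x hr hx, rfl⟩

end Graded

end KoszulCycles

section KoszulHomology

variable {K : Type} [Field K] {f : Fin 4 → RR K} {p : ℕ}

lemma apply_eq_zero_of_curryLeft_eq_zero
    {φ : (Fin 4 → RR K) [⋀^Fin (p + 1)]→ₗ[RR K] RR K} (hφ : φ.curryLeft f = 0)
    {v : Fin (p + 1) → Fin 4 → RR K} {i : Fin (p + 1)} (hv : v i = f) : φ v = 0 := by
  rw [← i.insertNth_self_removeNth v, hv, AlternatingMap.map_insertNth,
    ← AlternatingMap.curryLeft_apply_apply, hφ, AlternatingMap.zero_apply, smul_zero]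

lemma exists_altCoeff_eq_of_mem_ZK {Z : (Fin p → Fin 4) → RR K} (hZ : Z ∈ ZK K f p) :
    ∃ φ, altCoeff p φ = Z ∧ ∀ v i, v i = f → φ v = 0 := by
  obtain ⟨φ, rfl⟩ := exists_altCoeff_eq_of_mem_AltT (ZK_le_AltT p hZ)
  refine ⟨φ, rfl, fun v i hv => ?_⟩
  cases p with
  | zero => exact i.elim0
  | succ p =>
    refine apply_eq_zero_of_curryLeft_eq_zero (altCoeff_injective ?_) hv
    rw [← DK_altCoeff, map_zero]
    exact hZ.2

/-- The form is `e_i ∧ φ`, and the contraction with `f` is an antiderivation. -/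
lemma exists_curryLeft_eq_smul {φ : (Fin 4 → RR K) [⋀^Fin p]→ₗ[RR K] RR K}
    (hφ : ∀ v i, v i = f → φ v = 0) (i : Fin 4) :
    ∃ ω : (Fin 4 → RR K) [⋀^Fin (p + 1)]→ₗ[RR K] RR K, ω.curryLeft f = f i • φ := by
  refine ⟨AlternatingMap.alternatizeUncurryFin ((LinearMap.proj i).smulRight φ),
    AlternatingMap.ext fun v => ?_⟩
  rw [AlternatingMap.curryLeft_apply_apply, AlternatingMap.alternatizeUncurryFin_apply,
    Fin.sum_univ_succ, Finset.sum_eq_zero fun j _ => ?_]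
  · simp
  · cases p with
    | zero => exact j.elim0
    | succ p =>
      rw [LinearMap.smulRight_apply, AlternatingMap.smul_apply, hφ _ 0 (by simp [Fin.removeNth]),
        smul_zero, smul_zero]

theorem span_range_le_annihilator_HK (f : Fin 4 → RR K) (p : ℕ) :
    Ideal.span (Set.range f) ≤ Module.annihilator (RR K) (HK K f p) := by
  rw [Ideal.span_le]
  rintro _ ⟨i, rfl⟩
  refine Module.mem_annihilator.2 <| mkHK_surjective.forall.2 fun z => ?_
  obtain ⟨φ, hφz, hφ⟩ := exists_altCoeff_eq_of_mem_ZK z.2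
  obtain ⟨ω, hω⟩ := exists_curryLeft_eq_smul hφ i
  rw [← map_smul, mkHK_eq_zero, Submodule.coe_smul, ← hφz, ← map_smul, ← hω]
  exact altCoeff_curryLeft_mem_BK ω

lemma alternatingMap_eq_zero_of_four_lt (hp : 4 < p)
    (φ : (Fin 4 → RR K) [⋀^Fin p]→ₗ[RR K] RR K) : φ = 0 :=
  altCoeff_injective <| funext fun _ => apply_eq_zero_of_mem_AltT (altCoeff_mem_AltT φ) fun ha =>
    hp.not_ge <| by simpa using Fintype.card_le_of_injective _ ha

lemma alternatingMap_four_eq_zero (hf : f ≠ 0) {φ : (Fin 4 → RR K) [⋀^Fin 4]→ₗ[RR K] RR K}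
    (hφ : ∀ v i, v i = f → φ v = 0) : φ = 0 := by
  obtain ⟨i, hi⟩ := Function.ne_iff.1 hf
  obtain ⟨ω, hω⟩ := exists_curryLeft_eq_smul hφ i
  rw [alternatingMap_eq_zero_of_four_lt (by norm_num) ω, AlternatingMap.curryLeft_zero,
    LinearMap.zero_apply] at hω
  exact (smul_eq_zero.1 hω.symm).resolve_left hi

theorem subsingleton_HK_four (hf : f ≠ 0) : Subsingleton (HK K f 4) := by
  refine subsingleton_HK fun Z hZ => ?_
  obtain ⟨φ, rfl, hφ⟩ := exists_altCoeff_eq_of_mem_ZK hZ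
  rw [alternatingMap_four_eq_zero hf hφ, map_zero]
  exact zero_mem _

lemma curryLeft_det_ne_zero (hf : f ≠ 0) :
    (Pi.basisFun (RR K) (Fin 4)).det.curryLeft f ≠ 0 := fun h =>
  (Pi.basisFun (RR K) (Fin 4)).det_ne_zero <| alternatingMap_four_eq_zero hf fun _ _ =>
    apply_eq_zero_of_curryLeft_eq_zero h

theorem dvd_of_dvd_mul_of_forall_prime {ι A : Type*} [CommMonoidWithZero A]
    [UniqueFactorizationMonoid A] {z : ι → A} (hz : ∀ g, Prime g → ∃ i, ¬ g ∣ z i) {x : A}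
    (hx : x ≠ 0) : ∀ y, (∀ i, x ∣ y * z i) → x ∣ y := by
  induction x using UniqueFactorizationMonoid.induction_on_prime with
  | h₁ => exact absurd rfl hx
  | h₂ x hu => exact fun y _ => hu.dvd
  | h₃ x g hx0 hg ih =>
    intro y hy
    obtain ⟨i, hi⟩ := hz g hg
    obtain ⟨y, rfl⟩ := (hg.dvd_or_dvd ((dvd_mul_right g x).trans (hy i))).resolve_right hi
    refine mul_dvd_mul_left g (ih hx0 y fun j => ?_)
    rw [← mul_dvd_mul_iff_left hg.ne_zero, ← mul_assoc]
    exact hy j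

theorem exists_eq_smul_of_mul_eq_mul {ι A : Type*} [CommMonoidWithZero A]
    [UniqueFactorizationMonoid A] {x y : ι → A} (hx : x ≠ 0)
    (hprime : ∀ g, Prime g → ∃ i, ¬ g ∣ x i) (hxy : ∀ i j, y i * x j = x i * y j) :
    ∃ c : A, y = c • x := by
  obtain ⟨i, hi⟩ := Function.ne_iff.1 hx
  obtain ⟨c, hc⟩ := dvd_of_dvd_mul_of_forall_prime hprime hi (y i) fun j => ⟨y j, hxy i j⟩
  refine ⟨c, funext fun j => mul_left_cancel₀ hi ?_⟩
  rw [← hxy i j, hc, Pi.smul_apply, smul_eq_mul, mul_assoc]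

lemma ne_zero_of_forall_prime_not_dvd (hprime : ∀ g, Prime g → ∃ i, ¬ g ∣ f i) : f ≠ 0 := by
  rintro rfl
  obtain ⟨_, hi⟩ := hprime _ (X_prime (i := 0))
  exact hi (dvd_zero _)

lemma exists_eq_smul_curryLeft_det (hprime : ∀ g, Prime g → ∃ i, ¬ g ∣ f i)
    {φ : (Fin 4 → RR K) [⋀^Fin 3]→ₗ[RR K] RR K} (hφ : ∀ v i, v i = f → φ v = 0) :
    ∃ c : RR K, φ = c • (Pi.basisFun (RR K) (Fin 4)).det.curryLeft f := by
  have hf := ne_zero_of_forall_prime_not_dvd hprime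
  set ψ := (Pi.basisFun (RR K) (Fin 4)).det.curryLeft f
  have hψ : ψ ≠ 0 := curryLeft_det_ne_zero hf
  have hy (i : Fin 4) : ∃ y : RR K, f i • φ = y • ψ := by
    obtain ⟨ω, hω⟩ := exists_curryLeft_eq_smul hφ i
    rw [ω.eq_smul_basis_det (Pi.basisFun (RR K) (Fin 4)), AlternatingMap.curryLeft_smul] at hω
    exact ⟨_, hω.symm⟩
  choose y hy using hy
  obtain ⟨c, rfl⟩ := exists_eq_smul_of_mul_eq_mul hf hprime (y := y) fun i j => by
    refine smul_left_injective (RR K) hψ ?_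
    simp only [mul_comm (y i), mul_smul, ← hy, smul_comm (f i)]
  obtain ⟨i, hi⟩ := Function.ne_iff.1 hf
  refine ⟨c, smul_right_injective _ hi <| (hy i).trans ?_⟩
  rw [Pi.smul_apply, smul_eq_mul, mul_comm, mul_smul]

theorem subsingleton_HK_three (hprime : ∀ g, Prime g → ∃ i, ¬ g ∣ f i) :
    Subsingleton (HK K f 3) := by
  refine subsingleton_HK fun Z hZ => ?_
  obtain ⟨φ, rfl, hφ⟩ := exists_altCoeff_eq_of_mem_ZK hZ
  obtain ⟨c, rfl⟩ := exists_eq_smul_curryLeft_det hprime hφ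
  rw [map_smul]
  exact Submodule.smul_mem _ c (altCoeff_curryLeft_mem_BK _)

end KoszulHomology

section BasePoints

variable {k f} {m n : ℕ}

theorem mem_radical_span_of_eval_eq_zero {σ : Type*} [Finite σ] {S : Set (MvPolynomial σ k)}
    {p : MvPolynomial σ k} (h : ∀ x, (∀ g ∈ S, eval x g = 0) → eval x p = 0) :
    p ∈ (Ideal.span S).radical := by
  rw [← vanishingIdeal_zeroLocus_eq_radical (K := k), mem_vanishingIdeal_iff, zeroLocus_span]
  simpa only [aeval_eq_eval, Set.mem_ofPred_eq] using h

lemma eval_pt_smul {K : Type} [Field K] {g : RR K} (hg : g ∈ Rpiece K m n) (x : Fin 4 → K)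
    (c d : K) :
    eval (pt K (c • ![x 0, x 1]) (d • ![x 2, x 3])) g = c ^ m * d ^ n * eval x g := by
  rw [eval_eq', eval_eq', Finset.mul_sum]
  refine Finset.sum_congr rfl fun e he => ?_
  have hw := hg (mem_support_iff.1 he)
  rw [Finsupp.weight_apply, Finsupp.sum_fintype _ _ (by simp), Fin.sum_univ_four] at hw
  have hdeg : (e 0 + e 1 : ℤ) = m ∧ (e 2 + e 3 : ℤ) = n := by
    simpa [stw, Prod.ext_iff] using hw
  obtain ⟨hs, ht⟩ : e 0 + e 1 = m ∧ e 2 + e 3 = n := by exact_mod_cast hdeg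
  rw [← hs, ← ht, Fin.prod_univ_four, Fin.prod_univ_four]
  simp [pt]
  ring

lemma exists_basePt {K : Type} [Field K] {f : Fin 4 → RR K} (hf : ∀ i, f i ∈ Rpiece K m n)
    {x : Fin 4 → K} (hx : ∀ i, eval x (f i) = 0) (hs : ![x 0, x 1] ≠ 0) (ht : ![x 2, x 3] ≠ 0) :
    ∃ P ∈ BasePts K f, ∃ c d : Kˣ, c • ![x 0, x 1] = P.1.rep ∧ d • ![x 2, x 3] = P.2.rep := by
  obtain ⟨c, hc⟩ := Projectivization.exists_smul_eq_mk_rep K _ hs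
  obtain ⟨d, hd⟩ := Projectivization.exists_smul_eq_mk_rep K _ ht
  refine ⟨(Projectivization.mk K _ hs, Projectivization.mk K _ ht), fun i => ?_, c, d, hc, hd⟩
  rw [← hc, ← hd]
  exact (eval_pt_smul (hf i) x c d).trans (by rw [hx, mul_zero])

/-- A product `(s₀ + c s₁)(t₀ + d t₁)` of linear forms: the union of two lines, one of each
ruling, of `ℙ¹ × ℙ¹`. -/
def lineProduct {K : Type} [Field K] (c d : K) : RR K :=
  (X 0 + C c * X 1) * (X 2 + C d * X 3)

lemma lineProduct_eq_sum {K : Type} [Field K] (c d : K) :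
    lineProduct c d = ∑ j, (![1, d, c, c * d] : Fin 4 → K) j • uR K j := by
  simp [lineProduct, uR, Fin.sum_univ_four, smul_eq_C_mul]
  ring

lemma lineProduct_mem {K : Type} [Field K] (c d : K) : lineProduct c d ∈ Rpiece K 1 1 := by
  rw [lineProduct_eq_sum]
  exact Submodule.sum_mem _ fun j _ => Submodule.smul_mem _ _ (uR_mem j)

lemma lineProduct_mem_span {K : Type} [Field K] (c d : K) :
    lineProduct c d ∈ Ideal.span (Set.range (uR K)) := by
  rw [lineProduct_eq_sum]
  exact Submodule.sum_mem _ fun j _ =>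
    Submodule.smul_of_tower_mem _ _ (Ideal.subset_span ⟨j, rfl⟩)

lemma eval_uR_eq_zero {K : Type} [Field K] {x : Fin 4 → K}
    (hx : ![x 0, x 1] = 0 ∨ ![x 2, x 3] = 0) (j : Fin 4) : eval x (uR K j) = 0 := by
  rcases hx with hx | hx <;> fin_cases j <;> simp_all [uR, funext_iff]

lemma exists_rep_add_mul_ne_zero {K : Type} [Field K] [Infinite K]
    {S : Set (Projectivization K (Fin 2 → K))} (hS : S.Finite) :
    ∃ c : K, ∀ P ∈ S, P.rep 0 + c * P.rep 1 ≠ 0 := by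
  obtain ⟨c, hc⟩ := (hS.image fun P => -P.rep 0 / P.rep 1).exists_notMem
  refine ⟨c, fun P hP h => hc ⟨P, hP, ?_⟩⟩
  obtain h1 | h1 := eq_or_ne (P.rep 1) 0
  · have h0 : P.rep 0 = 0 := by simpa [h1] using h
    exact absurd (_root_.funext <| Fin.forall_fin_two.2 ⟨h0, h1⟩) P.rep_nonzero
  · field_simp
    linear_combination -h

theorem exists_lineProduct {K : Type} [Field K] [Infinite K] {f : Fin 4 → RR K}
    (hf : ∀ i, f i ∈ Rpiece K m n) (hB : (BasePts K f).Finite) :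
    ∃ c d : K, ∀ x, (∀ i, eval x (f i) = 0) → eval x (lineProduct c d) = 0 →
      ∀ j, eval x (uR K j) = 0 := by
  obtain ⟨c, hc⟩ := exists_rep_add_mul_ne_zero (hB.image Prod.fst)
  obtain ⟨d, hd⟩ := exists_rep_add_mul_ne_zero (hB.image Prod.snd)
  refine ⟨c, d, fun x hx hl => eval_uR_eq_zero ?_⟩
  by_contra! h
  obtain ⟨P, hP, r, s, hr, hs⟩ := exists_basePt hf hx h.1 h.2
  have hc := hc P.1 ⟨P, hP, rfl⟩
  have hd := hd P.2 ⟨P, hP, rfl⟩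
  simp only [← hr, ← hs, Pi.smul_apply, Units.smul_def, smul_eq_mul, Matrix.cons_val_zero,
    Matrix.cons_val_one] at hc hd
  rw [lineProduct, map_mul, mul_eq_zero] at hl
  simp only [map_mul, map_add, eval_X, eval_C] at hl
  rcases hl with hl | hl
  · exact hc (by linear_combination (r : K) * hl)
  · exact hd (by linear_combination (s : K) * hl)

lemma exists_uR_pow_mem_span (hf : ∀ i, f i ∈ Rpiece k m n) (hB : (BasePts k f).Finite) :
    ∃ (c d : k) (N : ℕ), ∀ j,
      uR k j ^ N ∈ Ideal.span (Set.range fun o : Option (Fin 4) => o.elim (lineProduct c d) f) := by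
  have := IsAlgClosed.instInfinite (K := k)
  obtain ⟨c, d, hcd⟩ := exists_lineProduct hf hB
  have hrad (j : Fin 4) := Ideal.mem_radical_iff.1 <|
    mem_radical_span_of_eval_eq_zero (p := uR k j)
    (S := Set.range fun o : Option (Fin 4) => o.elim (lineProduct c d) f) fun x hx =>
      hcd x (fun i => hx _ ⟨some i, rfl⟩) (hx _ ⟨none, rfl⟩) j
  choose N hN using hrad
  exact ⟨c, d, ∑ i, N i, fun j => Ideal.pow_mem_of_pow_mem _ (hN j)
    (Finset.single_le_sum (fun _ _ => Nat.zero_le _) (Finset.mem_univ j))⟩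

lemma exists_pow_sub_mul_mem_span {K : Type} [Field K] {f : Fin 4 → RR K}
    (hf : ∀ i, f i ∈ Rpiece K m n) {l : RR K} (hl : l ∈ Rpiece K 1 1) {N : ℕ} {j : Fin 4}
    (hN : uR K j ^ N ∈ Ideal.span (Set.range fun o : Option (Fin 4) => o.elim l f)) :
    ∃ c ∈ Rpiece K (N - 1) (N - 1), uR K j ^ N - c * l ∈ Ideal.span (Set.range f) := by
  let := weightedGradedAlgebra K stw
  obtain ⟨e₀, he₀⟩ := Ideal.mem_span_range_iff_exists_fun.1 hN
  have hdeg (o : Option (Fin 4)) : o.elim l f ∈ weightedHomogeneousSubmodule K stw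
      (o.elim (1, 1) fun _ => ((m : ℤ), (n : ℤ))) := by
    rcases o with _ | i
    · exact hl
    · exact hf i
  obtain ⟨e, he, hue⟩ := exists_homogeneous_coeff (weightedHomogeneousSubmodule K stw)
    (pow_mem_bigraded (uR_mem j) N) hdeg he₀
  refine ⟨e none, ?_, ?_⟩
  · rw [Rpiece]
    simpa only [Option.elim_none, mul_one, Prod.mk_sub_mk] using he none
  · rw [← hue, Fintype.sum_option]
    simp only [Option.elim_none, Option.elim_some, add_sub_cancel_left]
    exact Ideal.sum_mem _ fun i _ => Ideal.mul_mem_left _ _ (Ideal.subset_span ⟨i, rfl⟩)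

theorem LCvanish_HK (hf : ∀ i, f i ∈ Rpiece k m n) (hB : (BasePts k f).Finite) (p q : ℕ)
    (μ ν : ℤ) : LCvanish (uR k) (PH k f m n p) (q + 2) μ ν := by
  let := weightedGradedAlgebra k stw
  obtain ⟨c, d, N, hN⟩ := exists_uR_pow_mem_span hf hB
  choose e he hue using fun j => exists_pow_sub_mul_mem_span hf (lineProduct_mem c d) (hN j)
  exact LCvanish_of_principal (PH_grStable m n p) uR_mem (lineProduct_mem c d)
    (lineProduct_mem_span c d) he (fun j => span_range_le_annihilator_HK f p (hue j)) μ ν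

end BasePoints

section Coprimality

variable {m n : ℕ}

lemma irreducible_line {K : Type} [Field K] {a : Fin 2 → K} (ha : a ≠ 0) :
    Irreducible (C (a 1) * X 0 - C (a 0) * X 1 : RR K) := by
  obtain ⟨c, hc⟩ : ∃ c : Fin 4 →₀ K, c = Finsupp.single 0 (a 1) - Finsupp.single 1 (a 0) :=
    ⟨_, rfl⟩
  have hc0 : c ≠ 0 := by
    rintro rfl
    refine ha (_root_.funext <| Fin.forall_fin_two.2 ⟨?_, ?_⟩)
    · simpa using DFunLike.congr_fun hc 1
    · simpa using (DFunLike.congr_fun hc 0).symm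
  obtain ⟨i, hi⟩ := Finsupp.ne_iff.1 hc0
  have hirr := irreducible_sumSMulX c ⟨i, Finsupp.mem_support_iff.2 hi⟩ fun r hr =>
    isUnit_of_dvd_unit (hr i) (isUnit_iff_ne_zero.2 hi)
  simpa [hc, sumSMulX, smul_eq_C_mul] using hirr

variable {K : Type} [Field K] [Infinite K] {f : Fin 4 → RR K}

lemma exists_not_line_dvd (hf : ∀ i, f i ∈ Rpiece K m n) (hB : (BasePts K f).Finite)
    {a : Fin 2 → K} (ha : a ≠ 0) : ∃ i, ¬ C (a 1) * X 0 - C (a 0) * X 1 ∣ f i := by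
  by_contra! hdvd
  obtain ⟨y, hy⟩ := (hB.image fun P => P.2.rep 1 / P.2.rep 0).exists_notMem
  have hx (i : Fin 4) : eval ![a 0, a 1, 1, y] (f i) = 0 := by
    refine zero_dvd_iff.1 ?_
    convert map_dvd (eval ![a 0, a 1, 1, y]) (hdvd i)
    simp [mul_comm]
  obtain ⟨P, hP, c, d, -, hd⟩ := exists_basePt hf hx
    (fun h => ha (_root_.funext <| Fin.forall_fin_two.2 ⟨congrFun h 0, congrFun h 1⟩))
    fun h => one_ne_zero (congrFun h 0)
  refine hy ⟨P, hP, ?_⟩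
  simp only [← hd]
  simp [Units.smul_def]

lemma exists_not_X_two_dvd (hf : ∀ i, f i ∈ Rpiece K m n) (hB : (BasePts K f).Finite) :
    ∃ i, ¬ X 2 ∣ f i := by
  by_contra! hdvd
  obtain ⟨y, hy⟩ := (hB.image fun P => P.1.rep 1 / P.1.rep 0).exists_notMem
  have hx (i : Fin 4) : eval ![1, y, 0, 1] (f i) = 0 :=
    zero_dvd_iff.1 <| by simpa using map_dvd (eval ![1, y, 0, 1]) (hdvd i)
  obtain ⟨P, hP, c, d, hc, -⟩ := exists_basePt hf hx
    (fun h => one_ne_zero (congrFun h 0)) fun h => one_ne_zero (congrFun h 1)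
  refine hy ⟨P, hP, ?_⟩
  simp only [← hc]
  simp [Units.smul_def]

end Coprimality

section CommonFactors

variable {k f} {m n : ℕ}

/-- A common factor vanishes only over the base points and where the irrelevant ideal vanishes, so
it vanishes only on finitely many lines and divides a power of the product of their equations. -/
lemma dvd_prod_lines (hf : ∀ i, f i ∈ Rpiece k m n) (hB : (BasePts k f).Finite) {g : RR k}
    (hg : Prime g) (hgf : ∀ i, g ∣ f i) :
    g ∣ X 0 * X 2 * ∏ P ∈ hB.toFinset, (C (P.1.rep 1) * X 0 - C (P.1.rep 0) * X 1) := by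
  suffices h : ∀ x, (∀ q ∈ ({g} : Set (RR k)), eval x q = 0) →
      eval x (X 0 * X 2 * ∏ P ∈ hB.toFinset, (C (P.1.rep 1) * X 0 - C (P.1.rep 0) * X 1)) = 0 by
    obtain ⟨N, hN⟩ := mem_radical_span_of_eval_eq_zero h
    exact hg.dvd_of_dvd_pow (Ideal.mem_span_singleton.1 hN)
  intro x hx
  have hxf (i : Fin 4) : eval x (f i) = 0 := by
    rw [← zero_dvd_iff, ← hx g rfl]
    exact map_dvd (eval _) (hgf i)
  rw [map_mul, map_mul, eval_X, eval_X, map_prod]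
  by_cases hs : ![x 0, x 1] = 0
  · rw [show x 0 = 0 from congrFun hs 0, zero_mul, zero_mul]
  by_cases ht : ![x 2, x 3] = 0
  · rw [show x 2 = 0 from congrFun ht 0, mul_zero, zero_mul]
  obtain ⟨P, hP, r, -, hr, -⟩ := exists_basePt hf hxf hs ht
  rw [Finset.prod_eq_zero (hB.mem_toFinset.2 hP), mul_zero]
  simp only [← hr]
  simp [Units.smul_def]
  ring

theorem exists_not_dvd (hf : ∀ i, f i ∈ Rpiece k m n) (hB : (BasePts k f).Finite) {g : RR k}
    (hg : Prime g) : ∃ i, ¬ g ∣ f i := by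
  have := IsAlgClosed.instInfinite (K := k)
  by_contra! hgf
  have hdvd {l : RR k} (hl : Irreducible l) (hgl : g ∣ l) (i : Fin 4) : l ∣ f i :=
    (hg.irreducible.associated_of_dvd hl hgl).symm.dvd.trans (hgf i)
  have hline {a : Fin 2 → k} (ha : a ≠ 0) : ¬ g ∣ C (a 1) * X 0 - C (a 0) * X 1 := fun h =>
    have ⟨i, hi⟩ := exists_not_line_dvd hf hB ha
    hi (hdvd (irreducible_line ha) h i)
  rcases hg.dvd_or_dvd (dvd_prod_lines hf hB hg hgf) with h | h
  · rcases hg.dvd_or_dvd h with h | h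
    · exact hline (a := ![0, 1]) (fun h => one_ne_zero (congrFun h 1)) (by simpa using h)
    · obtain ⟨i, hi⟩ := exists_not_X_two_dvd hf hB
      exact hi (hdvd X_prime.irreducible h i)
  · obtain ⟨P, -, hP⟩ := (hg.dvd_finsetProd_iff _).1 h
    exact hline P.1.rep_nonzero hP

end CommonFactors

section Assembly

variable {m n p q : ℕ} {μ ν : ℤ}

lemma LCvanish_BK {K : Type} [Field K] {f : Fin 4 → RR K} (hf : ∀ i, f i ∈ Rpiece K m n)
    (hK : LCvanish (uR K) (KP K m n (p + 1)) q μ ν)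
    (hZ : LCvanish (uR K) (subPiece m n (ZK K f (p + 1))) (q + 1) μ ν) :
    LCvanish (uR K) (subPiece m n (BK K f p)) q μ ν :=
  (grExact_ZK_AltT_BK hf p).LCvanish_right ((subPiece_grStable m n _).shiftStable uR_mem)
    (LCvanish_AltT hK) hZ

lemma LCvanish_one_ZK {K : Type} [Field K] {f : Fin 4 → RR K} (hf : ∀ i, f i ∈ Rpiece K m n) :
    LCvanish (uR K) (subPiece m n (ZK K f p)) 1 μ ν := by
  cases p with
  | zero => exact LCvanish_AltT (LCvanish_one_KP m n 0 μ ν)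
  | succ p =>
    exact (grExact_ZK_AltT_BK hf p).LCvanish_left ((subPiece_grStable m n _).shiftStable uR_mem)
      (LCvanish_AltT (LCvanish_one_KP m n _ μ ν)) (LCvanish_zero_subPiece m n _ μ ν)

variable {k f}

lemma LCvanish_ZK_of_BK (hf : ∀ i, f i ∈ Rpiece k m n) (hB : (BasePts k f).Finite)
    (h : LCvanish (uR k) (subPiece m n (BK k f p)) (q + 2) μ ν) :
    LCvanish (uR k) (subPiece m n (ZK k f p)) (q + 2) μ ν :=
  (grExact_BK_ZK_HK m n p).LCvanish_mid ((subPiece_grStable m n _).shiftStable uR_mem) h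
    (LCvanish_HK hf hB p q μ ν)

lemma LCvanish_three_ZK (hf : ∀ i, f i ∈ Rpiece k m n) (hB : (BasePts k f).Finite)
    (h3 : LCvanish (uR k) (KP k m n (p + 1)) 3 μ ν) :
    LCvanish (uR k) (subPiece m n (ZK k f p)) 3 μ ν :=
  LCvanish_ZK_of_BK hf hB <| LCvanish_BK hf h3 <|
    LCvanish_four_of_mul_eq_mul ((subPiece_grStable m n _).shiftStable uR_mem)
      uR_zero_mul_uR_three μ ν

lemma LCvanish_two_BK (hf : ∀ i, f i ∈ Rpiece k m n) (hB : (BasePts k f).Finite)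
    (h2 : LCvanish (uR k) (KP k m n (p + 1)) 2 μ ν)
    (h3 : LCvanish (uR k) (KP k m n (p + 2)) 3 μ ν) :
    LCvanish (uR k) (subPiece m n (BK k f p)) 2 μ ν :=
  LCvanish_BK hf h2 (LCvanish_three_ZK hf hB h3)

theorem LCvanish_zero_HK (hf : ∀ i, f i ∈ Rpiece k m n) (hB : (BasePts k f).Finite)
    (h2 : LCvanish (uR k) (KP k m n (p + 2)) 2 μ ν)
    (h3 : LCvanish (uR k) (KP k m n (p + 3)) 3 μ ν) :
    LCvanish (uR k) (PH k f m n p) 0 μ ν :=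
  (grExact_BK_ZK_HK m n p).LCvanish_right ((subPiece_grStable m n _).shiftStable uR_mem)
    (LCvanish_zero_subPiece m n _ μ ν)
    (LCvanish_BK hf (LCvanish_one_KP m n _ μ ν)
      (LCvanish_ZK_of_BK hf hB (LCvanish_two_BK hf hB h2 h3)))

theorem LCvanish_one_HK (hf : ∀ i, f i ∈ Rpiece k m n) (hB : (BasePts k f).Finite)
    (h2 : LCvanish (uR k) (KP k m n (p + 1)) 2 μ ν)
    (h3 : LCvanish (uR k) (KP k m n (p + 2)) 3 μ ν) :
    LCvanish (uR k) (PH k f m n p) 1 μ ν :=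
  (grExact_BK_ZK_HK m n p).LCvanish_right ((subPiece_grStable m n _).shiftStable uR_mem)
    (LCvanish_one_ZK hf) (LCvanish_two_BK hf hB h2 h3)

end Assembly

theorem statement0_general {k : Type} [Field k] [IsAlgClosed k] {f : Fin 4 → RR k} {m n : ℕ}
    (hf : ∀ i, f i ∈ Rpiece k m n) (hBfin : (BasePts k f).Finite) :
    (Subsingleton (HK k f 3) ∧ Subsingleton (HK k f 4)) ∧
    (∀ (p i : ℕ), 2 ≤ i → ∀ μ ν : ℤ,
      LCvanish (B := k) (uR k) (PH k f m n p) i μ ν) ∧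
    (∀ (p j : ℕ), j ≤ 1 → ∀ μ ν : ℤ,
      LCvanish (B := k) (uR k) (KP k m n (p + 2 - j)) 2 μ ν →
      LCvanish (B := k) (uR k) (KP k m n (p + 3 - j)) 3 μ ν →
      LCvanish (B := k) (uR k) (PH k f m n p) j μ ν) := by
  have hcoprime (g : RR k) (hg : Prime g) : ∃ i, ¬ g ∣ f i := exists_not_dvd hf hBfin hg
  refine ⟨⟨subsingleton_HK_three hcoprime,
    subsingleton_HK_four (ne_zero_of_forall_prime_not_dvd hcoprime)⟩, fun p i hi μ ν => ?_,
    fun p j hj μ ν h2 h3 => ?_⟩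
  · obtain ⟨q, rfl⟩ := Nat.exists_eq_add_of_le' hi
    exact LCvanish_HK hf hBfin p q μ ν
  · interval_cases j
    · exact LCvanish_zero_HK hf hBfin h2 h3
    · exact LCvanish_one_HK hf hBfin h2 h3

theorem statement0
    (m n : ℕ) (hm : 1 ≤ m) (hn : 1 ≤ n)
    -- the `fᵢ` are bihomogeneous of bidegree `(m,n)`
    (hf : ∀ i, f i ∈ Rpiece k m n)
    -- the `fᵢ` minimally generate the ideal `I = (f₀,…,f₃)`
    (hmin : LinearIndependent k f)
    -- the closure of the image of `φ` is a surface `𝒮 = V(F) ⊆ ℙ³`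
    (F : SS k) (hF : F ≠ 0)
    (hFeq : RingHom.ker (aeval (R := k) f).toRingHom = Ideal.span {F})
    -- the base scheme `ℬ = V(I)` is finite
    (hBfin : (BasePts k f).Finite)
    -- every base point of `φ` is locally defined by at most three generators
    (hloc : ∀ a b, IsBasePoint k f a b → LocGen k (Ideal.span (Set.range f)) a b 3)
    -- `r = Σ_p d_p` is the degree of the base scheme, i.e. the eventual value of the
    -- Hilbert function of `R/I`
    (r : ℕ)
    (hr : ∃ A₀ B₀ : ℤ, ∀ μ ν : ℤ, A₀ ≤ μ → B₀ ≤ ν →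
      HFq k (Ideal.span (Set.range f)) μ ν = r)
 :
    -- `H₄ = H₃ = 0`:
    (Subsingleton (HK k f 3) ∧ Subsingleton (HK k f 4)) ∧
    -- `H^i_𝔪(H_p) = 0` for every `i > 1` and every `p` (all bigraded pieces vanish):
    (∀ (p i : ℕ), 2 ≤ i → ∀ μ ν : ℤ,
      LCvanish (B := k) (uR k) (PH k f m n p) i μ ν) ∧
    -- for `j = 0, 1` and every `p`: `H^j_𝔪(H_p)_{(μ,ν)} = 0` whenever
    -- `H²_𝔪(K_{p+2−j})_{(μ,ν)} = 0` and `H³_𝔪(K_{p+3−j})_{(μ,ν)} = 0`: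
    (∀ (p j : ℕ), j ≤ 1 → ∀ μ ν : ℤ,
      LCvanish (B := k) (uR k) (KP k m n (p + 2 - j)) 2 μ ν →
      LCvanish (B := k) (uR k) (KP k m n (p + 3 - j)) 3 μ ν →
      LCvanish (B := k) (uR k) (PH k f m n p) j μ ν) :=
  statement0_general hf hBfin
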